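/- (Minimax Grid Matching.) There exists a constant K such that the following holds with probability tending to 1 as m → ∞. Let m² points be chosen independently and uniformly at random in the square [0, m]², and let the grid points be the m² centers (i + 1/2, j + 1/2), 0 ≤ i, j < m, of the unit cells of the square. Then there exists a bijection between the m² random points and the m² grid points such that the Euclidean distance between every pair of matched points is at most K·(log m)^{3/4}. -/

import Mathlib

/-!
# The Leighton–Shor theorem on minimax grid matching

Cut the square into `N²` cells of side `σ ≈ 8 ^ r`, where `16 ^ r ≈ log m`, so that
`σ ≈ (log m) ^ (3 / 4)`. By the marriage theorem a matching of length `O(σ)` exists as soon as,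
for every union `R` of cells, the cells of `R` and their neighbours together contain at least
`σ² |R|` sample points, the expected number of points in `R` (`exists_matching`). Passing from `R`
to its thickening adds a set `D` of cells, which raises the expected number of points by `σ² |D|`,
and by isoperimetry `|D|` dominates the perimeter of the thickening or of its complement
(`isoperimetry`). So it suffices that the discrepancy (number of points minus expectation) of every
region is at most a small multiple of `σ²` times its perimeter (`le_card_thicken`). As the boundary
of a region splits into closed lattice trails (`le_tv_of_loops`), this reduces to the claim that
with high probability, simultaneously for all closed walks of length at most `2 ^ k` with winding
numbers `0` or `1`, the discrepancy of the winding function is `O(σ 8 ^ r 2 ^ k)` (`good_event`).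

The claim is proved by chaining. At scale `j` a walk is described by its positions at the
multiples of `2 ^ j`, rounded to a grid of mesh `2 ^ j / q` with `q = 4 ^ r`; the winding function
is a telescoping sum of differences between representatives of consecutive descriptions
(`exists_chain`). Each increment is controlled by Bernstein's inequality (`bernstein`) with an
exponent equal to the number of bits of the description plus `O(log m)`, and Kraft's inequality
(`kraft_codes`) makes the union bound converge. Both the number of bits and the area swept by an
increment are governed by the second differences of the walk at scale `j`. By the parallelogram law
the Dirichlet energies of the second differences at all scales add up to at most the energy of the
walk, which is at most its length (`energy_bound`). With `k ≈ log m ≈ q²` scales, the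
Cauchy–Schwarz inequality therefore bounds the total weighted area by a multiple of `q` instead of
`q²` times `2 ^ k` (`sum_triArea_le`), while the total number of bits is of order `q² 2 ^ k`.
Balancing the two in Bernstein's inequality gives the factor
`√(q · q²) = 8 ^ r ≈ (log m) ^ (3 / 4)`.
-/

open MeasureTheory

namespace MinimaxMatching

open Finset

/-! ### Dyadic polygonal approximation of paths -/

/-- The second difference of `a` across the dyadic time interval `[2i·2^l, (2i+2)·2^l]`. -/
def sdiff (a : ℕ → ℤ) (l i : ℕ) : ℤ :=
  2 * a ((2 * i + 1) * 2 ^ l) - a ((2 * i) * 2 ^ l) - a ((2 * i + 2) * 2 ^ l)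

/-- The area (up to a constant) between the dyadic polygons of `a` with meshes `2^l` and
`2^(l+1)`. -/
noncomputable def triArea (k : ℕ) (a : ℕ → ℤ) (l : ℕ) : ℝ :=
  2 ^ l * ∑ i ∈ range (2 ^ (k - l - 1)), |(sdiff a l i : ℝ)|

/-- The distance from `a` to its dyadic polygon of mesh `2^j`, measured as the sum of the
areas `triArea` at all finer scales. -/
noncomputable def polyErr (k : ℕ) (a : ℕ → ℤ) (j : ℕ) : ℝ := ∑ l ∈ range j, triArea k a l

/-- The Riemann sum of mesh `2^j` for the `L¹` distance between `a` and `a'` on `[0, 2^k]`. -/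
noncomputable def lDist (k j : ℕ) (a a' : ℕ → ℤ) : ℝ :=
  2 ^ j * ∑ i ∈ range (2 ^ (k - j)), |(a (i * 2 ^ j) : ℝ) - a' (i * 2 ^ j)|

lemma sum_range_two_mul (g : ℕ → ℝ) (n : ℕ) :
    ∑ i ∈ range (2 * n), g i = ∑ i ∈ range n, (g (2 * i) + g (2 * i + 1)) := by
  induction n with
  | zero => simp
  | succ n ih =>
    rw [show 2 * (n + 1) = 2 * n + 1 + 1 by ring, sum_range_succ, sum_range_succ, ih,
      sum_range_succ]
    ring

lemma sum_range_shift (g : ℕ → ℝ) (n : ℕ) (h : g n = g 0) :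
    ∑ i ∈ range n, g (i + 1) = ∑ i ∈ range n, g i := by
  have h1 := sum_range_succ g n
  have h2 := sum_range_succ' g n
  linarith

lemma triArea_nonneg (k : ℕ) (a : ℕ → ℤ) (l : ℕ) : 0 ≤ triArea k a l := by
  unfold triArea; positivity

/-- Halving the mesh changes the Riemann sum by at most half the triangle areas: on each dyadic
interval the midpoint differs from the average of the endpoints by half a second difference. -/
lemma lDist_step {k j : ℕ} (hjk : j < k) {a a' : ℕ → ℤ} (ha : a (2 ^ k) = a 0)
    (ha' : a' (2 ^ k) = a' 0) :
    lDist k j a a' ≤ lDist k (j + 1) a a' + (triArea k a j + triArea k a' j) / 2 := by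
  obtain ⟨n, rfl⟩ : ∃ n, k = j + 1 + n := ⟨k - (j + 1), by omega⟩
  unfold lDist triArea
  rw [show j + 1 + n - j = n + 1 by omega, show j + 1 + n - (j + 1) = n by omega,
    Nat.add_sub_cancel, pow_succ 2 n, mul_comm _ 2, sum_range_two_mul]
  set g : ℕ → ℝ := fun i => |(a (i * 2 ^ j) : ℝ) - a' (i * 2 ^ j)| with hg
  have e1 : ∀ i, |(a (i * 2 ^ (j + 1)) : ℝ) - a' (i * 2 ^ (j + 1))| = g (2 * i) := by
    intro i
    simp only [hg]
    rw [show i * 2 ^ (j + 1) = 2 * i * 2 ^ j by ring]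
  simp only [e1]
  have hsh : ∑ i ∈ range (2 ^ n), g (2 * (i + 1)) = ∑ i ∈ range (2 ^ n), g (2 * i) := by
    refine sum_range_shift (fun i => g (2 * i)) _ ?_
    simp only [hg]
    rw [show 2 * 2 ^ n * 2 ^ j = 2 ^ (j + 1 + n) by ring, ha, ha']
    simp
  have key : ∀ i, g (2 * i + 1) ≤ (g (2 * i) + g (2 * (i + 1))) / 2
      + (|(sdiff a j i : ℝ)| + |(sdiff a' j i : ℝ)|) / 2 := by
    intro i
    simp only [hg, sdiff]
    rw [show 2 * (i + 1) = 2 * i + 2 by ring]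
    push_cast
    rcases abs_cases ((a ((2 * i + 1) * 2 ^ j) : ℝ) - a' ((2 * i + 1) * 2 ^ j)) with h | h <;>
    rcases abs_cases ((a ((2 * i) * 2 ^ j) : ℝ) - a' ((2 * i) * 2 ^ j)) with h' | h' <;>
    rcases abs_cases ((a ((2 * i + 2) * 2 ^ j) : ℝ) - a' ((2 * i + 2) * 2 ^ j)) with h'' | h'' <;>
    · rw [h.1, h'.1, h''.1]
      have := neg_abs_le (2 * (a ((2 * i + 1) * 2 ^ j) : ℝ) - a (2 * i * 2 ^ j)
        - a ((2 * i + 2) * 2 ^ j))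
      have := le_abs_self (2 * (a ((2 * i + 1) * 2 ^ j) : ℝ) - a (2 * i * 2 ^ j)
        - a ((2 * i + 2) * 2 ^ j))
      have := neg_abs_le (2 * (a' ((2 * i + 1) * 2 ^ j) : ℝ) - a' (2 * i * 2 ^ j)
        - a' ((2 * i + 2) * 2 ^ j))
      have := le_abs_self (2 * (a' ((2 * i + 1) * 2 ^ j) : ℝ) - a' (2 * i * 2 ^ j)
        - a' ((2 * i + 2) * 2 ^ j))
      linarith
  have hs := sum_le_sum (fun i (_ : i ∈ range (2 ^ n)) => key i)
  simp only [sum_add_distrib, ← sum_div] at hs ⊢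
  rw [hsh] at hs
  have h2 : (0 : ℝ) < 2 ^ j := by positivity
  rw [pow_succ]
  nlinarith

lemma lDist_le_polyErr {k j : ℕ} (hjk : j ≤ k) {a a' : ℕ → ℤ} (ha : a (2 ^ k) = a 0)
    (ha' : a' (2 ^ k) = a' 0) :
    lDist k 0 a a' ≤ lDist k j a a' + (polyErr k a j + polyErr k a' j) / 2 := by
  induction j with
  | zero => simp [polyErr]
  | succ j ih =>
    have h1 := ih (by omega)
    have h2 := lDist_step (by omega : j < k) ha ha'
    unfold polyErr at *
    rw [sum_range_succ, sum_range_succ]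
    linarith

/-- The Dirichlet energy of the second differences at all scales is at most that of `a`
(parallelogram law at each scale). All scales share one energy budget, which is what saves the
factor `√k` in `sum_triArea_le`. -/
lemma energy_bound {k : ℕ} {a : ℕ → ℤ} (hstep : ∀ t, |a (t + 1) - a t| ≤ 1) :
    ∑ l ∈ range k, (∑ i ∈ range (2 ^ (k - l - 1)), (sdiff a l i : ℝ) ^ 2) / 2 ^ (l + 1)
      ≤ 2 ^ k := by
  set B : ℕ → ℝ := fun l =>
    (∑ i ∈ range (2 ^ (k - l)), ((a ((i + 1) * 2 ^ l) : ℝ) - a (i * 2 ^ l)) ^ 2) / 2 ^ l with hB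
  have step : ∀ l, l < k → B l = B (l + 1) +
      (∑ i ∈ range (2 ^ (k - l - 1)), (sdiff a l i : ℝ) ^ 2) / 2 ^ (l + 1) := by
    intro l hl
    obtain ⟨n, rfl⟩ : ∃ n, k = l + 1 + n := ⟨k - (l + 1), by omega⟩
    simp only [hB]
    rw [show l + 1 + n - l = n + 1 by omega, show l + 1 + n - (l + 1) = n by omega,
      Nat.add_sub_cancel, pow_succ 2 n, mul_comm _ 2, sum_range_two_mul,
      ← add_div, ← sum_add_distrib, pow_succ (2 : ℝ) l, mul_comm _ (2 : ℝ), ← div_div]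
    congr 1
    rw [sum_div]
    refine sum_congr rfl fun i _ => ?_
    simp only [sdiff]
    rw [show (2 * i + 1 + 1) = 2 * i + 2 by ring,
      show (i + 1) * 2 ^ (l + 1) = (2 * i + 2) * 2 ^ l by ring,
      show i * 2 ^ (l + 1) = 2 * i * 2 ^ l by ring]
    push_cast
    ring
  have tele : ∀ n, n ≤ k → ∑ l ∈ range n,
      (∑ i ∈ range (2 ^ (k - l - 1)), (sdiff a l i : ℝ) ^ 2) / 2 ^ (l + 1) = B 0 - B n := by
    intro n hn
    induction n with
    | zero => simp
    | succ n ih =>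
      rw [sum_range_succ, ih (by omega), step n (by omega)]
      ring
  rw [tele k le_rfl]
  have h0 : 0 ≤ B k := by simp only [hB]; positivity
  have h1 : B 0 ≤ 2 ^ k := by
    simp only [hB]
    simp only [pow_zero, mul_one, div_one, Nat.sub_zero]
    calc _ ≤ ∑ i ∈ range (2 ^ k), (1 : ℝ) := by
          refine sum_le_sum fun i _ => ?_
          rw [sq_le_one_iff_abs_le_one]
          exact_mod_cast hstep i
      _ = 2 ^ k := by simp
  linarith

/-- The weighted triangle areas of all `k ≈ q²` scales together are `O(q 2^k)`, although a single
scale may contribute `2^k`: this is the Cauchy–Schwarz inequality applied to `energy_bound`, in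
the form `2 x y ≤ x² + y²` with weights adapted to `q`. -/
lemma sum_triArea_le {k : ℕ} {a : ℕ → ℤ} (hstep : ∀ t, |a (t + 1) - a t| ≤ 1) {q : ℝ}
    (hq : 0 < q) (hk : (k : ℝ) ≤ 5 * q ^ 2) :
    ∑ l ∈ range k, triArea k a l / 2 ^ l ≤ 3 * q * 2 ^ k := by
  have h1 : ∀ l ∈ range k, triArea k a l / 2 ^ l * q ≤ 2 ^ k / 4 + q ^ 2 *
      ((∑ i ∈ range (2 ^ (k - l - 1)), (sdiff a l i : ℝ) ^ 2) / 2 ^ (l + 1)) := by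
    intro l hl
    obtain ⟨n, rfl⟩ : ∃ n, k = l + 1 + n := ⟨k - (l + 1), by have := mem_range.1 hl; omega⟩
    unfold triArea
    rw [show l + 1 + n - l - 1 = n by omega]
    have h2 : (0 : ℝ) < 2 ^ l := by positivity
    rw [mul_comm ((2 : ℝ) ^ l), mul_div_assoc, div_self h2.ne', mul_one, sum_mul]
    have : ∀ i ∈ range (2 ^ n), |(sdiff a l i : ℝ)| * q ≤
        2 ^ l / 2 + q ^ 2 / 2 ^ (l + 1) * (sdiff a l i : ℝ) ^ 2 := by
      intro i _
      rw [← sq_abs (sdiff a l i : ℝ), pow_succ (2 : ℝ) l]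
      set z := |(sdiff a l i : ℝ)|
      have : 0 ≤ (2 ^ l - q * z) ^ 2 / 2 ^ l := by positivity
      have e : (2 ^ l - q * z) ^ 2 / 2 ^ l = 2 ^ l - 2 * (z * q) + q ^ 2 / 2 ^ l * z ^ 2 := by
        field_simp; ring
      rw [e] at this
      have e2 : q ^ 2 / (2 ^ l * 2) * z ^ 2 = (q ^ 2 / 2 ^ l * z ^ 2) / 2 := by
        field_simp
      rw [e2]; linarith
    refine (sum_le_sum this).trans (le_of_eq ?_)
    rw [sum_add_distrib, ← mul_sum]
    simp only [sum_const, card_range, nsmul_eq_mul]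
    push_cast
    rw [pow_add, pow_succ]
    field_simp
    ring
  have h2 := sum_le_sum h1
  rw [← sum_mul, sum_add_distrib, ← mul_sum] at h2
  have h3 := energy_bound (k := k) hstep
  simp only [sum_const, card_range, nsmul_eq_mul] at h2
  have h4 : (0 : ℝ) < 2 ^ k := by positivity
  have h5 := mul_le_mul_of_nonneg_left h3 (sq_nonneg q)
  have h6 := mul_le_mul_of_nonneg_right hk h4.le
  have : (∑ l ∈ range k, triArea k a l / 2 ^ l) * q ≤ (3 * q * 2 ^ k) * q := by nlinarith
  exact le_of_mul_le_mul_right this hq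

/-- Summation by parts: a triangle area at scale `l` occurs in `polyErr` at all `j > l`, with
geometrically decreasing weights. -/
lemma sum_polyErr_le (k : ℕ) (a : ℕ → ℤ) :
    ∑ j ∈ range (k + 1), polyErr k a j / 2 ^ j ≤ ∑ l ∈ range k, triArea k a l / 2 ^ l := by
  have h : ∀ n, ∑ j ∈ range (n + 1), polyErr k a j / 2 ^ j + polyErr k a n / 2 ^ n
      = ∑ l ∈ range n, triArea k a l / 2 ^ l := by
    intro n
    induction n with
    | zero => simp [polyErr]
    | succ n ih =>
      have e : polyErr k a (n + 1) = polyErr k a n + triArea k a n := by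
        simp only [polyErr, sum_range_succ]
      rw [sum_range_succ, sum_range_succ (fun l => triArea k a l / 2 ^ l), ← ih, e, pow_succ]
      field_simp
      ring
  have h0 : 0 ≤ polyErr k a k / 2 ^ k := by
    have : 0 ≤ polyErr k a k := sum_nonneg fun l _ => triArea_nonneg k a l
    positivity
  linarith [h k]

/-! ### Codes of paths and the Kraft inequality -/

/-- The code of `a` at scale `j`: its values at the multiples of `2^j`, rounded down to a grid
of mesh `2^j / q`. -/
def code (q : ℤ) (j : ℕ) (a : ℕ → ℤ) (i : ℕ) : ℤ := q * a (i * 2 ^ j) / 2 ^ j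

/-- The code at scale `j + 1` computed from the code at scale `j`. -/
def parent (x : ℕ → ℤ) (i : ℕ) : ℤ := x (2 * i) / 2

/-- The number of bits spent on describing a code, of length `2^(n+1)`, given its parent. -/
def bits (n : ℕ) (x : ℕ → ℤ) : ℕ :=
  ∑ i ∈ range (2 ^ n), (3 + (x (2 * i + 1) - parent x i - parent x (i + 1)).natAbs)

/-- The number of bits spent on describing a code of length `2^n` when its coarsest ancestor
is known. -/
def cost : ℕ → (ℕ → ℤ) → ℕ
  | 0, _ => 0
  | n + 1, x => cost n (parent x) + bits n x

lemma parent_code (q : ℤ) (j : ℕ) (a : ℕ → ℤ) : parent (code q j a) = code q (j + 1) a := by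
  funext i
  unfold parent code
  rw [Int.ediv_ediv_of_nonneg (by positivity), show 2 * i * 2 ^ j = i * 2 ^ (j + 1) by ring,
    pow_succ (2 : ℤ)]

lemma code_zero {q : ℤ} {a a' : ℕ → ℤ} (hq : 0 < q) (h : code q 0 a = code q 0 a') : a = a' := by
  funext i
  have := congrFun h i
  simp only [code, pow_zero, mul_one, Int.ediv_one] at this
  exact mul_left_cancel₀ hq.ne' this

/-- Two walks with the same code agree at multiples of `2^j` up to the rounding mesh. -/
lemma lDist_le_of_code {q : ℤ} {k j : ℕ} (hq : 0 < q) (hj : j ≤ k) {a a' : ℕ → ℤ}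
    (h : code q j a = code q j a') : lDist k j a a' ≤ 2 ^ (k + j) / q := by
  have hq' : (0 : ℝ) < q := by exact_mod_cast hq
  have hpt : ∀ i, |(a (i * 2 ^ j) : ℝ) - a' (i * 2 ^ j)| ≤ 2 ^ j / q := by
    intro i
    have h1 := congrFun h i
    unfold code at h1
    set u := a (i * 2 ^ j)
    set u' := a' (i * 2 ^ j)
    have p : (0 : ℤ) < 2 ^ j := by positivity
    have b1 := Int.mul_ediv_add_emod (q * u) (2 ^ j)
    have b2 := Int.mul_ediv_add_emod (q * u') (2 ^ j)
    have b3 := Int.emod_nonneg (q * u) p.ne'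
    have b4 := Int.emod_nonneg (q * u') p.ne'
    have b5 := Int.emod_lt_of_pos (q * u) p
    have b6 := Int.emod_lt_of_pos (q * u') p
    rw [h1] at b1
    have c1 : q * u - q * u' ≤ 2 ^ j := by linarith
    have c2 : -(2 ^ j) ≤ q * u - q * u' := by linarith
    have c1' : (q : ℝ) * u - q * u' ≤ 2 ^ j := by exact_mod_cast c1
    have c2' : -(2 ^ j) ≤ (q : ℝ) * u - q * u' := by exact_mod_cast c2
    have e : |(u : ℝ) - u'| * q = |((u : ℝ) - u') * q| := by rw [abs_mul, abs_of_pos hq']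
    rw [le_div_iff₀ hq', e, abs_le]
    constructor <;> linarith
  unfold lDist
  have := sum_le_sum (fun i (_ : i ∈ range (2 ^ (k - j))) => hpt i)
  simp only [sum_const, card_range, nsmul_eq_mul] at this
  calc _ ≤ (2 : ℝ) ^ j * (((2 ^ (k - j) : ℕ) : ℝ) * (2 ^ j / q)) := by gcongr
    _ = 2 ^ (k + j) / q := by
      push_cast
      obtain ⟨n, rfl⟩ : ∃ n, k = j + n := ⟨k - j, by omega⟩
      rw [show j + n - j = n by omega, show j + n + j = j + n + j by rfl, pow_add, pow_add]
      ring

/-- The innovation at scale `l`, rescaled to units of `2^l / q`, is half a second difference of the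
walk up to rounding errors. -/
lemma natAbs_code_le {q : ℤ} (hq : 0 < q) (l i : ℕ) (a : ℕ → ℤ) :
    ((code q l a (2 * i + 1) - parent (code q l a) i - parent (code q l a) (i + 1)).natAbs : ℝ)
      ≤ 2 + q * |(sdiff a l i : ℝ)| / 2 ^ (l + 1) := by
  rw [parent_code]
  unfold code sdiff
  rw [show i * 2 ^ (l + 1) = 2 * i * 2 ^ l by ring,
    show (i + 1) * 2 ^ (l + 1) = (2 * i + 2) * 2 ^ l by ring]
  set u := a ((2 * i + 1) * 2 ^ l)
  set v := a ((2 * i) * 2 ^ l)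
  set w := a ((2 * i + 2) * 2 ^ l)
  have fl : ∀ (z : ℤ) (n : ℕ), ((z / 2 ^ n : ℤ) : ℝ) ≤ (z : ℝ) / 2 ^ n ∧
      (z : ℝ) / 2 ^ n < ((z / 2 ^ n : ℤ) : ℝ) + 1 := by
    intro z n
    have p : (0 : ℤ) < 2 ^ n := by positivity
    have p' : (0 : ℝ) < 2 ^ n := by positivity
    have b1 := Int.mul_ediv_add_emod z (2 ^ n)
    have b3 := Int.emod_nonneg z p.ne'
    have b5 := Int.emod_lt_of_pos z p
    have c1 : (z / 2 ^ n) * 2 ^ n ≤ z := by linarith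
    have c2 : z < (z / 2 ^ n + 1) * 2 ^ n := by linarith
    rw [le_div_iff₀ p', div_lt_iff₀ p']
    exact ⟨by exact_mod_cast c1, by exact_mod_cast c2⟩
  obtain ⟨a1, a2⟩ := fl (q * u) l
  obtain ⟨b1, b2⟩ := fl (q * v) (l + 1)
  obtain ⟨c1, c2⟩ := fl (q * w) (l + 1)
  rw [Nat.cast_natAbs, Int.cast_abs]
  have hq' : (0 : ℝ) < q := by exact_mod_cast hq
  have e : (q : ℝ) * |((2 * u - v - w : ℤ) : ℝ)| / 2 ^ (l + 1)
      = |((q * u : ℤ) : ℝ) / 2 ^ l - ((q * v : ℤ) : ℝ) / 2 ^ (l + 1)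
        - ((q * w : ℤ) : ℝ) / 2 ^ (l + 1)| := by
    have p' : (0 : ℝ) < 2 ^ (l + 1) := by positivity
    conv_lhs => rw [← abs_of_pos hq', ← abs_mul, ← abs_of_pos p', ← abs_div]
    congr 1
    rw [pow_succ]
    push_cast
    field_simp
  rw [e]
  push_cast at *
  rw [abs_le]
  set t := (q * u : ℝ) / 2 ^ l - (q * v : ℝ) / 2 ^ (l + 1) - (q * w : ℝ) / 2 ^ (l + 1) with ht
  have := neg_abs_le t
  have := le_abs_self t
  constructor <;> linarith

lemma bits_code_le {q : ℤ} (hq : 0 < q) {k l : ℕ} (hl : l < k) (a : ℕ → ℤ) :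
    2 ^ (l + 1) * (bits (k - l - 1) (code q l a) : ℝ) ≤
      5 * 2 ^ k + q * (triArea k a l / 2 ^ l) := by
  obtain ⟨n, rfl⟩ : ∃ n, k = l + 1 + n := ⟨k - (l + 1), by omega⟩
  unfold bits triArea
  rw [show l + 1 + n - l - 1 = n by omega]
  have h2 : (0 : ℝ) < 2 ^ l := by positivity
  rw [mul_comm ((2 : ℝ) ^ l), mul_div_assoc, div_self h2.ne', mul_one]
  push_cast
  have : ∀ i ∈ range (2 ^ n), (3 : ℝ) + ((code q l a (2 * i + 1) - parent (code q l a) i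
      - parent (code q l a) (i + 1)).natAbs : ℝ)
      ≤ 5 + q * |(sdiff a l i : ℝ)| / 2 ^ (l + 1) := by
    intro i _
    linarith [natAbs_code_le hq l i a]
  have h3 := sum_le_sum this
  calc _ ≤ 2 ^ (l + 1) * _ := mul_le_mul_of_nonneg_left h3 (by positivity)
    _ = _ := by
      rw [sum_add_distrib, ← sum_div, ← mul_sum]
      simp only [sum_const, card_range, nsmul_eq_mul]
      push_cast
      rw [pow_add _ (l + 1) n, pow_succ]
      field_simp

/-- The total description length of the codes at all scales, weighted by `2^j`. The rounding terms
cost `O(1)` bits per dyadic interval, hence `k 2^k` in total; the second differences cost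
`q · q 2^k` by `sum_triArea_le`. Both are of the order `q² 2^k`, which motivates the mesh
`2^j / q`. -/
lemma sum_cost_code_le {q : ℤ} (hq : 0 < q) {k : ℕ} {a : ℕ → ℤ}
    (hstep : ∀ t, |a (t + 1) - a t| ≤ 1) (hk : (k : ℝ) ≤ 5 * (q : ℝ) ^ 2) :
    ∑ j ∈ range (k + 1), 2 ^ j * (cost (k - j) (code q j a) : ℝ)
      ≤ 28 * (q : ℝ) ^ 2 * 2 ^ k := by
  have hq' : (0 : ℝ) < q := by exact_mod_cast hq
  have hid : ∀ n, n ≤ k → ∑ j ∈ range n, 2 ^ j * (cost (k - j) (code q j a) : ℝ)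
      = ∑ j ∈ range n, (2 ^ (j + 1) - 1) * (bits (k - j - 1) (code q j a) : ℝ)
        + (2 ^ n - 1) * (cost (k - n) (code q n a) : ℝ) := by
    intro n hn
    induction n with
    | zero => simp
    | succ n ih =>
      rw [sum_range_succ, ih (by omega), sum_range_succ]
      obtain ⟨d, rfl⟩ : ∃ d, k = n + 1 + d := ⟨k - (n + 1), by omega⟩
      rw [show n + 1 + d - n = d + 1 by omega, show n + 1 + d - (n + 1) = d by omega,
        Nat.add_sub_cancel, cost, parent_code]
      push_cast
      rw [pow_succ]
      ring
  rw [sum_range_succ, hid k le_rfl, Nat.sub_self, cost]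
  have h1 : ∀ j ∈ range k, (2 ^ (j + 1) - 1) * (bits (k - j - 1) (code q j a) : ℝ)
      ≤ 5 * 2 ^ k + q * (triArea k a j / 2 ^ j) := by
    intro j hj
    refine le_trans ?_ (bits_code_le hq (mem_range.1 hj) a)
    gcongr
    linarith
  have h2 := sum_le_sum h1
  rw [sum_add_distrib, ← mul_sum, ← mul_sum] at h2
  simp only [sum_const, card_range, nsmul_eq_mul] at h2
  have h3 := mul_le_mul_of_nonneg_left (sum_triArea_le hstep hq' hk) hq'.le
  have h4 := mul_le_mul_of_nonneg_right hk (show (0 : ℝ) ≤ 2 ^ k by positivity)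
  simp only [Nat.cast_zero, mul_zero, add_zero]
  nlinarith

lemma sum_half_pow_natAbs_le (T : Finset ℤ) : ∑ o ∈ T, (1 / 2 : ℝ) ^ o.natAbs ≤ 3 := by
  have h : ∀ B : ℕ, ∑ o ∈ Icc (-(B : ℤ)) B, (1 / 2 : ℝ) ^ o.natAbs ≤ 3 - 2 * (1 / 2) ^ B := by
    intro B
    induction B with
    | zero => norm_num
    | succ B ih =>
      have e : Icc (-((B + 1 : ℕ) : ℤ)) ((B + 1 : ℕ) : ℤ)
          = insert (-((B + 1 : ℕ) : ℤ)) (insert ((B + 1 : ℕ) : ℤ) (Icc (-(B : ℤ)) B)) := by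
        ext z
        simp only [mem_Icc, mem_insert]
        push_cast
        omega
      rw [e, sum_insert, sum_insert]
      · rw [Int.natAbs_neg, Int.natAbs_natCast, pow_succ]
        linarith
      · simp
      · simp only [mem_insert, mem_Icc]; push_cast; omega
  have hsub : T ⊆ Icc (-((T.sup Int.natAbs : ℕ) : ℤ)) ((T.sup Int.natAbs : ℕ) : ℤ) := by
    intro o ho
    have := le_sup (f := Int.natAbs) ho
    rw [mem_Icc]
    omega
  refine (sum_le_sum_of_subset_of_nonneg hsub fun _ _ _ => by positivity).trans ((h _).trans ?_)
  have : (0 : ℝ) ≤ 2 * (1 / 2) ^ (T.sup Int.natAbs) := by positivity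
  linarith

lemma sum_weight_le (T : Finset (ℤ × ℤ)) (hT : ∀ p ∈ T, p.1 = 0 ∨ p.1 = 1) :
    ∑ p ∈ T, (1 / 2 : ℝ) ^ (3 + p.2.natAbs) ≤ 1 := by
  have hsub : T ⊆ ({0, 1} : Finset ℤ) ×ˢ (T.image Prod.snd) := by
    intro p hp
    simp only [mem_product, mem_insert, mem_singleton]
    exact ⟨hT p hp, mem_image_of_mem _ hp⟩
  refine (sum_le_sum_of_subset_of_nonneg hsub fun _ _ _ => by positivity).trans ?_
  rw [sum_product]
  simp only [pow_add, ← mul_sum]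
  have := sum_half_pow_natAbs_le (T.image Prod.snd)
  rw [sum_pair (by norm_num)]
  linarith

/-- The Kraft inequality for the codes with a given parent: the innovations at distinct
positions are described independently of each other. -/
lemma kraft_fiber (n : ℕ) (F : Finset (ℕ → ℤ)) (y : ℕ → ℤ)
    (hF : ∀ x ∈ F, ∀ i, 2 ^ (n + 1) ≤ i → x i = x 0) (hy : ∀ x ∈ F, parent x = y) :
    ∑ x ∈ F, (1 / 2 : ℝ) ^ bits n x ≤ 1 := by
  classical
  set φ : (ℕ → ℤ) → Fin (2 ^ n) → ℤ × ℤ := fun x i =>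
    (x (2 * i) % 2, x (2 * i + 1) - y i - y (i + 1)) with hφ
  have hb : ∀ x ∈ F, (1 / 2 : ℝ) ^ bits n x
      = ∏ i : Fin (2 ^ n), (1 / 2 : ℝ) ^ (3 + (φ x i).2.natAbs) := by
    intro x hx
    unfold bits
    rw [← prod_pow_eq_pow_sum, ← Fin.prod_univ_eq_prod_range (fun i => (1 / 2 : ℝ) ^
      (3 + (x (2 * i + 1) - parent x i - parent x (i + 1)).natAbs)), hy x hx]
  have hinj : Set.InjOn φ F := by
    intro x hx x' hx' h
    have hi : ∀ i, i < 2 ^ n → x (2 * i) = x' (2 * i) ∧ x (2 * i + 1) = x' (2 * i + 1) := by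
      intro i hi
      have h1 := congrFun h ⟨i, hi⟩
      simp only [hφ, Prod.mk.injEq] at h1
      have h2 : x (2 * i) / 2 = x' (2 * i) / 2 :=
        (congrFun (hy x hx) i).trans (congrFun (hy x' hx') i).symm
      omega
    have h0 : x 0 = x' 0 := by simpa using (hi 0 (by positivity)).1
    funext i
    by_cases hlt : i < 2 ^ (n + 1)
    · rw [pow_succ] at hlt
      have h3 := hi (i / 2) (by omega)
      rcases Nat.even_or_odd' i with ⟨c, rfl | rfl⟩
      · rw [show 2 * c / 2 = c by omega] at h3; exact h3.1
      · rw [show (2 * c + 1) / 2 = c by omega] at h3; exact h3.2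
    · rw [hF x hx i (by omega), hF x' hx' i (by omega), h0]
  rw [sum_congr rfl hb, ← sum_image (f := fun p : Fin (2 ^ n) → ℤ × ℤ =>
    ∏ i, (1 / 2 : ℝ) ^ (3 + (p i).2.natAbs)) hinj]
  have hsub : F.image φ ⊆ Fintype.piFinset (fun i => F.image (fun x => φ x i)) := by
    intro p hp
    obtain ⟨x, hx, rfl⟩ := mem_image.1 hp
    rw [Fintype.mem_piFinset]
    exact fun i => mem_image_of_mem _ hx
  refine (sum_le_sum_of_subset_of_nonneg hsub
    fun _ _ _ => prod_nonneg fun _ _ => by positivity).trans ?_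
  rw [← prod_univ_sum (fun i => F.image (fun x => φ x i))
    (fun _ p => (1 / 2 : ℝ) ^ (3 + p.2.natAbs))]
  refine prod_le_one (fun _ _ => sum_nonneg fun _ _ => by positivity) fun i _ =>
    sum_weight_le _ ?_
  intro p hp
  obtain ⟨x, hx, rfl⟩ := mem_image.1 hp
  simp only [hφ]
  omega

/-- The Kraft inequality for codes of length `2^n` which have at most `M` coarsest ancestors
`x 0 / 2^n`. -/
lemma kraft (M n : ℕ) (F : Finset (ℕ → ℤ)) (hF : ∀ x ∈ F, ∀ i, 2 ^ n ≤ i → x i = x 0)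
    (h0 : ∀ x ∈ F, 0 ≤ x 0 / 2 ^ n ∧ x 0 / 2 ^ n < M) :
    ∑ x ∈ F, (1 / 2 : ℝ) ^ cost n x ≤ M := by
  classical
  induction n generalizing F with
  | zero =>
    simp only [cost, pow_zero, sum_const, nsmul_eq_mul, mul_one]
    have : F.card ≤ (Ico (0 : ℤ) M).card := by
      refine card_le_card_of_injOn (fun x => x 0) ?_ ?_
      · intro x hx
        simpa using h0 x hx
      · intro x hx x' hx' h
        funext i
        rcases Nat.eq_zero_or_pos i with rfl | hi
        · exact h
        · rw [hF x hx i hi, hF x' hx' i hi]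
          exact h
    rw [Int.card_Ico] at this
    simp only [sub_zero, Int.toNat_natCast] at this
    exact_mod_cast this
  | succ n ih =>
    rw [← sum_fiberwise_of_maps_to (fun x hx => mem_image_of_mem parent hx)]
    calc _ ≤ ∑ y ∈ F.image parent, (1 / 2 : ℝ) ^ cost n y := by
          refine sum_le_sum fun y _ => ?_
          have e : ∀ x ∈ F.filter (fun x => parent x = y), (1 / 2 : ℝ) ^ cost (n + 1) x
              = (1 / 2) ^ cost n y * (1 / 2) ^ bits n x := by
            intro x hx
            rw [cost, (mem_filter.1 hx).2, pow_add]
          rw [sum_congr rfl e, ← mul_sum]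
          refine mul_le_of_le_one_right (by positivity) (kraft_fiber n _ y ?_ ?_)
          · exact fun x hx => hF x (mem_filter.1 hx).1
          · exact fun x hx => (mem_filter.1 hx).2
      _ ≤ M := by
          refine ih _ ?_ ?_
          · intro y hy i hi
            obtain ⟨x, hx, rfl⟩ := mem_image.1 hy
            simp only [parent]
            rw [hF x hx (2 * i) (by rw [pow_succ]; omega), mul_zero]
          · intro y hy
            obtain ⟨x, hx, rfl⟩ := mem_image.1 hy
            have := h0 x hx
            simp only [parent, mul_zero]
            rwa [Int.ediv_ediv_of_nonneg (by positivity), ← pow_succ']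

/-! ### Winding functions of closed walks -/

/-- The winding number around the cell `c` (with lower left corner `c`) of the closed walk
`t ↦ (a t, b t)`, `0 ≤ t ≤ T`: the signed number of passes below `c`. -/
def wind (T : ℕ) (a b : ℕ → ℤ) (c : ℤ × ℤ) : ℤ :=
  ∑ t ∈ range T, (if b t ≤ c.2 then 1 else 0) *
    ((if c.1 < a (t + 1) then 1 else 0) - (if c.1 < a t then 1 else 0))

/-- The cells of the square `[0, N]²`. -/
noncomputable def box (N : ℕ) : Finset (ℤ × ℤ) := Ico (0 : ℤ) N ×ˢ Ico (0 : ℤ) N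

lemma sum_abs_lt_sub_le (S : Finset ℤ) (u v : ℤ) :
    ∑ x ∈ S, |(if x < u then (1 : ℤ) else 0) - (if x < v then 1 else 0)| ≤ |u - v| := by
  classical
  have h : ∀ x ∈ S, |(if x < u then (1 : ℤ) else 0) - (if x < v then 1 else 0)|
      = if x ∈ Ico (min u v) (max u v) then 1 else 0 := by
    intro x _
    simp only [mem_Ico]
    split_ifs <;> simp <;> omega
  rw [sum_congr rfl h, ← sum_filter, sum_const, nsmul_eq_mul, mul_one]
  have h2 : (S.filter (fun x => x ∈ Ico (min u v) (max u v))).card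
      ≤ (Ico (min u v) (max u v)).card := by
    refine card_le_card fun x hx => (mem_filter.1 hx).2
  rw [Int.card_Ico] at h2
  have h3 : ((max u v - min u v).toNat : ℤ) = |u - v| := by
    rcases abs_cases (u - v) with h | h <;> omega
  omega

lemma sum_abs_le_sub_le (S : Finset ℤ) (u v : ℤ) :
    ∑ y ∈ S, |(if u ≤ y then (1 : ℤ) else 0) - (if v ≤ y then 1 else 0)| ≤ |u - v| := by
  refine le_trans (le_of_eq (sum_congr rfl fun y _ => ?_)) (sum_abs_lt_sub_le S u v)
  split_ifs <;> simp <;> omega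

/-- Summation by parts for the difference of two Stieltjes sums. -/
lemma sum_parts (X Y X' Y' : ℕ → ℤ) (T : ℕ) :
    ∑ t ∈ range T, Y t * (X (t + 1) - X t) - ∑ t ∈ range T, Y' t * (X' (t + 1) - X' t)
      = ∑ t ∈ range T, ((Y t - Y' t) * (X (t + 1) - X t)
          - (X (t + 1) - X' (t + 1)) * (Y' (t + 1) - Y' t))
        + (Y' T * (X T - X' T) - Y' 0 * (X 0 - X' 0)) := by
  induction T with
  | zero => simp
  | succ n ih =>
    rw [sum_range_succ, sum_range_succ, sum_range_succ]
    linear_combination ih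

lemma abs_wind_sub_le {T : ℕ} {a b a' b' : ℕ → ℤ} (ha : a T = a 0)
    (ha' : a' T = a' 0) (hb' : b' T = b' 0) (c : ℤ × ℤ) :
    |wind T a b c - wind T a' b' c| ≤ ∑ t ∈ range T,
      (|(if b t ≤ c.2 then (1 : ℤ) else 0) - (if b' t ≤ c.2 then 1 else 0)| *
        |(if c.1 < a (t + 1) then (1 : ℤ) else 0) - (if c.1 < a t then 1 else 0)| +
      |(if c.1 < a (t + 1) then (1 : ℤ) else 0) - (if c.1 < a' (t + 1) then 1 else 0)| *
        |(if b' (t + 1) ≤ c.2 then (1 : ℤ) else 0) - (if b' t ≤ c.2 then 1 else 0)|) := by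
  unfold wind
  rw [sum_parts (fun t => if c.1 < a t then 1 else 0) (fun t => if b t ≤ c.2 then 1 else 0)
    (fun t => if c.1 < a' t then 1 else 0) (fun t => if b' t ≤ c.2 then 1 else 0)]
  simp only [ha, ha', hb', sub_self, add_zero]
  refine (abs_sum_le_sum_abs _ _).trans (sum_le_sum fun t _ => ?_)
  refine (abs_sub _ _).trans ?_
  rw [abs_mul, abs_mul]

/-- The `L¹` distance of winding functions is at most the area swept when one walk is deformed
into the other. -/
lemma sum_abs_wind_sub_le (N : ℕ) {T : ℕ} {a b a' b' : ℕ → ℤ} (ha : a T = a 0)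
    (ha' : a' T = a' 0) (hb' : b' T = b' 0) (hsa : ∀ t, |a (t + 1) - a t| ≤ 1)
    (hsb' : ∀ t, |b' (t + 1) - b' t| ≤ 1) :
    ∑ c ∈ box N, |wind T a b c - wind T a' b' c| ≤
      ∑ t ∈ range T, (|b t - b' t| + |a (t + 1) - a' (t + 1)|) := by
  refine (sum_le_sum fun c _ => abs_wind_sub_le ha ha' hb' c).trans ?_
  rw [sum_comm]
  refine sum_le_sum fun t _ => ?_
  unfold box
  rw [sum_product, sum_comm]
  simp only [sum_add_distrib]
  refine add_le_add ?_ ?_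
  · refine (sum_mul_sum (Ico (0 : ℤ) N) (Ico (0 : ℤ) N)
      (fun y => |(if b t ≤ y then (1 : ℤ) else 0) - (if b' t ≤ y then 1 else 0)|)
      (fun x => |(if x < a (t + 1) then (1 : ℤ) else 0) - (if x < a t then 1 else 0)|)).symm.le.trans ?_
    have h1 := sum_abs_le_sub_le (Ico (0 : ℤ) N) (b t) (b' t)
    have h2 := (sum_abs_lt_sub_le (Ico (0 : ℤ) N) (a (t + 1)) (a t)).trans (hsa t)
    calc _ ≤ |b t - b' t| * 1 := mul_le_mul h1 h2 (sum_nonneg fun _ _ => abs_nonneg _)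
            (abs_nonneg _)
      _ = _ := mul_one _
  · rw [sum_comm]
    refine (sum_mul_sum (Ico (0 : ℤ) N) (Ico (0 : ℤ) N)
      (fun x => |(if x < a (t + 1) then (1 : ℤ) else 0) - (if x < a' (t + 1) then 1 else 0)|)
      (fun y => |(if b' (t + 1) ≤ y then (1 : ℤ) else 0)
        - (if b' t ≤ y then 1 else 0)|)).symm.le.trans ?_
    have h1 := sum_abs_lt_sub_le (Ico (0 : ℤ) N) (a (t + 1)) (a' (t + 1))
    have h2 := (sum_abs_le_sub_le (Ico (0 : ℤ) N) (b' (t + 1)) (b' t)).trans (hsb' t)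
    calc _ ≤ |a (t + 1) - a' (t + 1)| * 1 := mul_le_mul h1 h2
            (sum_nonneg fun _ _ => abs_nonneg _) (abs_nonneg _)
      _ = _ := mul_one _

lemma sum_abs_wind_sub_le_lDist (N : ℕ) {k : ℕ} {a b a' b' : ℕ → ℤ} (ha : a (2 ^ k) = a 0)
    (ha' : a' (2 ^ k) = a' 0) (hb' : b' (2 ^ k) = b' 0)
    (hsa : ∀ t, |a (t + 1) - a t| ≤ 1) (hsb' : ∀ t, |b' (t + 1) - b' t| ≤ 1) :
    ∑ c ∈ box N, |((wind (2 ^ k) a b c : ℤ) : ℝ) - wind (2 ^ k) a' b' c| ≤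
      lDist k 0 a a' + lDist k 0 b b' := by
  have h := sum_abs_wind_sub_le N (b := b) ha ha' hb' hsa hsb'
  have h' : ∑ c ∈ box N, |((wind (2 ^ k) a b c : ℤ) : ℝ) - wind (2 ^ k) a' b' c| ≤
      ∑ t ∈ range (2 ^ k), (|(b t : ℝ) - b' t| + |(a (t + 1) : ℝ) - a' (t + 1)|) := by
    exact_mod_cast h
  refine h'.trans (le_of_eq ?_)
  rw [sum_add_distrib, sum_range_shift (fun t => |(a t : ℝ) - a' t|) _ (by simp only [ha, ha'])]
  simp only [lDist, pow_zero, one_mul, Nat.sub_zero, mul_one]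
  ring

lemma wind_const {T : ℕ} {a b : ℕ → ℤ} (ha : ∀ t, a t = a 0) (c : ℤ × ℤ) :
    wind T a b c = 0 := by
  unfold wind
  refine sum_eq_zero fun t _ => ?_
  rw [ha (t + 1), ha t]
  simp

/-- Standing still after time `T` does not change winding numbers. -/
lemma wind_extend {T T' : ℕ} (hT : T ≤ T') {a b : ℕ → ℤ} (ha : ∀ t, T ≤ t → a t = a 0) :
    wind T' a b = wind T a b := by
  funext c
  unfold wind
  symm
  refine sum_subset (range_mono hT) fun t _ ht => ?_
  rw [mem_range, not_lt] at ht
  rw [ha (t + 1) (by omega), ha t ht]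
  simp

lemma wind_eq_zero {N T : ℕ} {a b : ℕ → ℤ} (ha : ∀ t, 0 ≤ a t ∧ a t ≤ N)
    (hb : ∀ t, 0 ≤ b t ∧ b t ≤ N) (hT : a T = a 0) {c : ℤ × ℤ} (hc : c ∉ box N) :
    wind T a b c = 0 := by
  have hc' : c.1 < 0 ∨ N ≤ c.1 ∨ c.2 < 0 ∨ N ≤ c.2 := by
    simp only [box, mem_product, mem_Ico] at hc
    omega
  unfold wind
  rcases hc' with h | h | h | h
  · refine sum_eq_zero fun t _ => ?_
    rw [if_pos (h.trans_le (ha (t + 1)).1), if_pos (h.trans_le (ha t).1)]; simp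
  · refine sum_eq_zero fun t _ => ?_
    rw [if_neg (not_lt.2 ((ha (t + 1)).2.trans h)), if_neg (not_lt.2 ((ha t).2.trans h))]; simp
  · refine sum_eq_zero fun t _ => ?_
    rw [if_neg (not_le.2 (h.trans_le (hb t).1))]; simp
  · have : ∀ t, b t ≤ c.2 := fun t => (hb t).2.trans h
    simp only [this, if_true, one_mul]
    rw [sum_range_sub (fun t => if c.1 < a t then (1 : ℤ) else 0), hT, sub_self]

/-! ### Chaining for winding functions -/

/-- The closed lattice walks `t ↦ (v.1 t, v.2 t)` of length at most `2^k` in `[0, N]²`, extended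
by a constant, whose winding numbers are `0` or `1`. Diagonal steps are allowed. -/
structure IsWalk (N k : ℕ) (v : (ℕ → ℤ) × (ℕ → ℤ)) : Prop where
  mem1 : ∀ t, 0 ≤ v.1 t ∧ v.1 t ≤ N
  mem2 : ∀ t, 0 ≤ v.2 t ∧ v.2 t ≤ N
  step1 : ∀ t, |v.1 (t + 1) - v.1 t| ≤ 1
  step2 : ∀ t, |v.2 (t + 1) - v.2 t| ≤ 1
  const1 : ∀ t, 2 ^ k ≤ t → v.1 t = v.1 0
  const2 : ∀ t, 2 ^ k ≤ t → v.2 t = v.2 0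
  wind01 : ∀ c, wind (2 ^ k) v.1 v.2 c = 0 ∨ wind (2 ^ k) v.1 v.2 c = 1

lemma finite_eventually_const (N T : ℕ) :
    {a : ℕ → ℤ | (∀ t, 0 ≤ a t ∧ a t ≤ N) ∧ ∀ t, T ≤ t → a t = a 0}.Finite := by
  have h : (Set.univ.pi fun _ : Fin (T + 1) => Set.Icc (0 : ℤ) N).Finite :=
    Set.Finite.pi fun _ => Set.finite_Icc _ _
  refine Set.Finite.of_finite_image (f := fun a (i : Fin (T + 1)) => a i) (h.subset ?_) ?_
  · rintro _ ⟨a, ha, rfl⟩ i _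
    exact ha.1 i
  · intro a ha a' ha' haa
    have h' : ∀ t, t < T + 1 → a t = a' t := fun t ht => congrFun haa ⟨t, ht⟩
    funext t
    by_cases ht : t < T + 1
    · exact h' t ht
    · rw [ha.2 t (by omega), ha'.2 t (by omega), h' 0 (by omega)]

lemma finite_isWalk (N k : ℕ) : {v | IsWalk N k v}.Finite :=
  ((finite_eventually_const N (2 ^ k)).prod (finite_eventually_const N (2 ^ k))).subset
    fun _ hv => ⟨⟨hv.mem1, hv.const1⟩, ⟨hv.mem2, hv.const2⟩⟩

/-- The pair of codes of the two coordinates. -/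
def pcode (q : ℤ) (j : ℕ) (v : (ℕ → ℤ) × (ℕ → ℤ)) : (ℕ → ℤ) × (ℕ → ℤ) :=
  (code q j v.1, code q j v.2)

/-- The number of bits for a pair of codes at scale `j`. -/
def pcost (k j : ℕ) (x : (ℕ → ℤ) × (ℕ → ℤ)) : ℕ := cost (k - j) x.1 + cost (k - j) x.2

/-- The polygonal error of a planar walk: the sum of the errors of its coordinates. -/
noncomputable def pErr (k : ℕ) (v : (ℕ → ℤ) × (ℕ → ℤ)) (j : ℕ) : ℝ :=
  polyErr k v.1 j + polyErr k v.2 j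

/-- Every class of walks with the same code has a representative of least polygonal error. -/
lemma exists_rep (N k : ℕ) (q : ℤ) :
    ∃ rep : ℕ → (ℕ → ℤ) × (ℕ → ℤ) → (ℕ → ℤ) × (ℕ → ℤ), ∀ j v, IsWalk N k v →
      IsWalk N k (rep j (pcode q j v)) ∧ pcode q j (rep j (pcode q j v)) = pcode q j v ∧
        pErr k (rep j (pcode q j v)) j ≤ pErr k v j := by
  have h : ∀ j x, ∃ u, ∀ v, IsWalk N k v → pcode q j v = x →
      IsWalk N k u ∧ pcode q j u = x ∧ pErr k u j ≤ pErr k v j := by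
    intro j x
    by_cases hx : ∃ v, IsWalk N k v ∧ pcode q j v = x
    · obtain ⟨u, hu, hmin⟩ := Set.exists_min_image {v | IsWalk N k v ∧ pcode q j v = x}
        (fun v => pErr k v j) ((finite_isWalk N k).subset fun v hv => hv.1) hx
      exact ⟨u, fun v hv hvx => ⟨hu.1, hu.2, hmin v ⟨hv, hvx⟩⟩⟩
    · exact ⟨(0, 0), fun v hv hvx => absurd ⟨v, hv, hvx⟩ hx⟩
  choose rep hrep using h
  exact ⟨rep, fun j v hv => hrep j _ v hv rfl⟩

lemma sum_abs_wind_sub_of_pcode {N k j : ℕ} {q : ℤ} (hq : 0 < q) (hj : j ≤ k)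
    {u v : (ℕ → ℤ) × (ℕ → ℤ)} (hu : IsWalk N k u) (hv : IsWalk N k v)
    (huv : pcode q j u = pcode q j v) :
    ∑ c ∈ box N, |((wind (2 ^ k) u.1 u.2 c : ℤ) : ℝ) - wind (2 ^ k) v.1 v.2 c| ≤
      2 * (2 ^ (k + j) / q) + (pErr k u j + pErr k v j) / 2 := by
  have h1 := sum_abs_wind_sub_le_lDist N (hu.const1 _ le_rfl) (hv.const1 _ le_rfl) (b := u.2)
    (hv.const2 _ le_rfl) hu.step1 hv.step2
  have h2 := lDist_le_polyErr hj (hu.const1 _ le_rfl) (hv.const1 _ le_rfl)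
  have h3 := lDist_le_polyErr hj (hu.const2 _ le_rfl) (hv.const2 _ le_rfl)
  have h4 := lDist_le_of_code hq hj (congrArg Prod.fst huv)
  have h5 := lDist_le_of_code hq hj (congrArg Prod.snd huv)
  unfold pErr
  linarith

/-- At the coarsest scale a closed walk is compared with the constant walk, whose winding numbers
vanish. -/
lemma sum_abs_wind_le {N k : ℕ} {u : (ℕ → ℤ) × (ℕ → ℤ)} (hu : IsWalk N k u) :
    ∑ c ∈ box N, |((wind (2 ^ k) u.1 u.2 c : ℤ) : ℝ)| ≤ pErr k u k / 2 := by
  have h1 := sum_abs_wind_sub_le_lDist N (a' := fun _ => u.1 0) (b' := fun _ => u.2 0)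
    (hu.const1 _ le_rfl) rfl (b := u.2) rfl hu.step1 (by simp)
  have h2 := lDist_le_polyErr le_rfl (hu.const1 _ le_rfl) (a' := fun _ => u.1 0) rfl
  have h3 := lDist_le_polyErr le_rfl (hu.const2 _ le_rfl) (a' := fun _ => u.2 0) rfl
  have h4 : ∀ (x : ℤ), polyErr k (fun _ => x) k = 0 := by
    intro x
    simp only [polyErr, triArea, sdiff]
    refine sum_eq_zero fun l _ => ?_
    have : (2 * x - x - x) = 0 := by ring
    simp [this]
  have h5 : ∀ a : ℕ → ℤ, lDist k k a (fun _ => a 0) = 0 := by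
    intro a; simp [lDist]
  rw [h5, h4] at h2 h3
  have h6 : ∀ c, wind (2 ^ k) (fun _ => u.1 0) (fun _ => u.2 0) c = 0 :=
    fun c => wind_const (fun _ => rfl) c
  simp only [h6, Int.cast_zero, sub_zero] at h1
  unfold pErr
  linarith

/-- The set of codes at scale `j`. -/
noncomputable def codes (N k : ℕ) (q : ℤ) (j : ℕ) : Finset ((ℕ → ℤ) × (ℕ → ℤ)) := by
  classical exact (finite_isWalk N k).toFinset.image (pcode q j)

lemma mem_codes {N k : ℕ} {q : ℤ} {j : ℕ} {x} :
    x ∈ codes N k q j ↔ ∃ v, IsWalk N k v ∧ pcode q j v = x := by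
  simp [codes]

/-- The coarsest ancestor of a code is a single rounded point, for which there are at most
`(q N + 1)²` choices. -/
lemma kraft_codes (N k q j : ℕ) (hj : j ≤ k) :
    ∑ x ∈ codes N k q j, (1 / 2 : ℝ) ^ pcost k j x ≤ (q * N + 1 : ℝ) ^ 2 := by
  classical
  have key : ∀ a : ℕ → ℤ, (∀ t, 0 ≤ a t ∧ a t ≤ N) → (∀ t, 2 ^ k ≤ t → a t = a 0) →
      (∀ i, 2 ^ (k - j) ≤ i → code q j a i = code q j a 0) ∧
        (0 ≤ code q j a 0 / 2 ^ (k - j) ∧ code q j a 0 / 2 ^ (k - j) < (q * N + 1 : ℕ)) := by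
    intro a ha hc
    refine ⟨fun i hi => ?_, ?_, ?_⟩
    · unfold code
      rw [hc (i * 2 ^ j), zero_mul]
      calc 2 ^ k = 2 ^ (k - j) * 2 ^ j := by rw [← pow_add]; congr 1; omega
        _ ≤ _ := Nat.mul_le_mul_right _ hi
    · unfold code
      have := (ha (0 * 2 ^ j)).1
      positivity
    · unfold code
      rw [Int.ediv_ediv_of_nonneg (by positivity)]
      have h1 := ha (0 * 2 ^ j)
      have h2 : (q : ℤ) * a (0 * 2 ^ j) ≤ q * N := mul_le_mul_of_nonneg_left h1.2 (by positivity)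
      have h3 : (q : ℤ) * a (0 * 2 ^ j) / (2 ^ j * 2 ^ (k - j)) ≤ q * a (0 * 2 ^ j) :=
        Int.ediv_le_self _ (mul_nonneg (by positivity) h1.1)
      push_cast
      linarith
  set F1 := (codes N k q j).image Prod.fst
  set F2 := (codes N k q j).image Prod.snd
  have k1 : ∑ x ∈ F1, (1 / 2 : ℝ) ^ cost (k - j) x ≤ (q * N + 1 : ℕ) := by
    refine kraft _ _ F1 ?_ ?_ <;>
    · intro x hx
      obtain ⟨y, hy, rfl⟩ := mem_image.1 hx
      obtain ⟨v, hv, rfl⟩ := mem_codes.1 hy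
      first
      | exact (key v.1 hv.mem1 hv.const1).1
      | exact (key v.1 hv.mem1 hv.const1).2
  have k2 : ∑ x ∈ F2, (1 / 2 : ℝ) ^ cost (k - j) x ≤ (q * N + 1 : ℕ) := by
    refine kraft _ _ F2 ?_ ?_ <;>
    · intro x hx
      obtain ⟨y, hy, rfl⟩ := mem_image.1 hx
      obtain ⟨v, hv, rfl⟩ := mem_codes.1 hy
      first
      | exact (key v.2 hv.mem2 hv.const2).1
      | exact (key v.2 hv.mem2 hv.const2).2
  calc ∑ x ∈ codes N k q j, (1 / 2 : ℝ) ^ pcost k j x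
      ≤ ∑ x ∈ F1 ×ˢ F2, (1 / 2 : ℝ) ^ pcost k j x := by
        refine sum_le_sum_of_subset_of_nonneg (fun x hx => ?_) fun _ _ _ => by positivity
        exact mem_product.2 ⟨mem_image_of_mem _ hx, mem_image_of_mem _ hx⟩
    _ = (∑ x ∈ F1, (1 / 2 : ℝ) ^ cost (k - j) x) * ∑ x ∈ F2, (1 / 2 : ℝ) ^ cost (k - j) x := by
        rw [sum_mul_sum, sum_product]
        simp only [pcost, pow_add]
    _ ≤ ((q * N + 1 : ℕ) : ℝ) * ((q * N + 1 : ℕ) : ℝ) :=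
        mul_le_mul k1 k2 (sum_nonneg fun _ _ => by positivity) (by positivity)
    _ = _ := by push_cast; ring

lemma sum_pErr_le {N k : ℕ} {q : ℝ} (hq : 0 < q) (hk : (k : ℝ) ≤ 5 * q ^ 2)
    {v : (ℕ → ℤ) × (ℕ → ℤ)} (hv : IsWalk N k v) :
    ∑ j ∈ range (k + 1), pErr k v j / 2 ^ j ≤ 6 * q * 2 ^ k := by
  have h1 := (sum_polyErr_le k v.1).trans (sum_triArea_le hv.step1 hq hk)
  have h2 := (sum_polyErr_le k v.2).trans (sum_triArea_le hv.step2 hq hk)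
  simp only [pErr, add_div, sum_add_distrib]
  linarith

/-- The chaining decomposition: the winding function of a walk is a sum over the scales `j` of
increments `g j (x j)`, where `x j` is the code of the walk at scale `j`. The two sums bound the
`L¹` norms of the increments and the description lengths of the codes. -/
lemma exists_chain (N k q : ℕ) (hq : 0 < q) (hk : (k : ℝ) ≤ 5 * (q : ℝ) ^ 2) :
    ∃ g : ℕ → (ℕ → ℤ) × (ℕ → ℤ) → ℤ × ℤ → ℝ,
      (∀ j, ∀ x ∈ codes N k q j, ∀ c, |g j x c| ≤ 1) ∧
      ∀ v, IsWalk N k v →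
        (∀ c, ((wind (2 ^ k) v.1 v.2 c : ℤ) : ℝ) = ∑ j ∈ range (k + 1), g j (pcode q j v) c) ∧
        ∑ j ∈ range (k + 1), (∑ c ∈ box N, |g j (pcode q j v) c|) / 2 ^ j ≤ 48 * q * 2 ^ k ∧
        ∑ j ∈ range (k + 1), 2 ^ j * (pcost k j (pcode q j v) : ℝ) ≤ 56 * (q : ℝ) ^ 2 * 2 ^ k := by
  classical
  have hq' : (0 : ℤ) < q := by exact_mod_cast hq
  have hqr : (0 : ℝ) < q := by exact_mod_cast hq
  -- a class is represented by a walk of least polygonal error, so that the error of the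
  -- representative is controlled by the error of the given walk itself, with no loss from a
  -- supremum over the class
  obtain ⟨rep, hrep⟩ := exists_rep N k q
  set W : (ℕ → ℤ) × (ℕ → ℤ) → ℤ × ℤ → ℝ := fun v c => ((wind (2 ^ k) v.1 v.2 c : ℤ) : ℝ) with hW
  set par : (ℕ → ℤ) × (ℕ → ℤ) → (ℕ → ℤ) × (ℕ → ℤ) := fun x => (parent x.1, parent x.2) with hpar
  have hparc : ∀ j v, par (pcode q j v) = pcode q (j + 1) v := by
    intro j v
    simp only [hpar, pcode, parent_code]
  refine ⟨fun j x c => W (rep j x) c - if j = k then 0 else W (rep (j + 1) (par x)) c, ?_, ?_⟩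
  · intro j x hx c
    obtain ⟨v, hv, rfl⟩ := mem_codes.1 hx
    beta_reduce
    rw [hparc]
    have h1 := (hrep j v hv).1.wind01 c
    have h2 := (hrep (j + 1) v hv).1.wind01 c
    simp only [hW]
    split_ifs
    · rcases h1 with h1 | h1 <;> rw [h1] <;> norm_num
    · rcases h1 with h1 | h1 <;> rcases h2 with h2 | h2 <;> rw [h1, h2] <;> norm_num
  · intro v hv
    simp only [hparc]
    set u : ℕ → (ℕ → ℤ) × (ℕ → ℤ) := fun j => rep j (pcode q j v) with hu
    have hu0 : u 0 = v := by
      have h := (hrep 0 v hv).2.1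
      exact Prod.ext (code_zero hq' (congrArg Prod.fst h)) (code_zero hq' (congrArg Prod.snd h))
    have huW : ∀ j, IsWalk N k (u j) := fun j => (hrep j v hv).1
    have huE : ∀ j, pErr k (u j) j ≤ pErr k v j := fun j => (hrep j v hv).2.2
    refine ⟨fun c => ?_, ?_, ?_⟩
    · rw [sum_range_succ, if_pos rfl, sub_zero]
      have h : ∑ j ∈ range k, (W (u j) c - if j = k then 0 else W (u (j + 1)) c)
          = ∑ j ∈ range k, (W (u j) c - W (u (j + 1)) c) := by
        refine sum_congr rfl fun j hj => ?_
        rw [if_neg (mem_range.1 hj).ne]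
      have h2 := sum_range_sub' (fun j => W (u j) c) k
      rw [hu0] at h2
      change W v c = ∑ j ∈ range k, (W (u j) c - if j = k then 0 else W (u (j + 1)) c) + W (u k) c
      rw [h, h2]
      ring
    · have hE0 : ∀ j, 0 ≤ pErr k v j := fun j => add_nonneg
        (sum_nonneg fun _ _ => triArea_nonneg _ _ _) (sum_nonneg fun _ _ => triArea_nonneg _ _ _)
      have hD : ∀ j ≤ k, ∑ c ∈ box N, |W (u j) c - W v c| ≤ 2 * (2 ^ (k + j) / q) + pErr k v j := by
        intro j hj
        have := sum_abs_wind_sub_of_pcode hq' hj (huW j) hv (hrep j v hv).2.1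
        have h2 := huE j
        push_cast at this
        linarith
      have hlow : ∀ j ∈ range k,
          (∑ c ∈ box N, |W (u j) c - if j = k then 0 else W (u (j + 1)) c|) / 2 ^ j
            ≤ 6 * 2 ^ k / q + (pErr k v j / 2 ^ j + 2 * (pErr k v (j + 1) / 2 ^ (j + 1))) := by
        intro j hj
        have hj' := mem_range.1 hj
        have h1 := hD j hj'.le
        have h2 := hD (j + 1) hj'
        have h3 : ∑ c ∈ box N, |W (u j) c - if j = k then 0 else W (u (j + 1)) c| ≤
            ∑ c ∈ box N, |W (u j) c - W v c| + ∑ c ∈ box N, |W (u (j + 1)) c - W v c| := by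
          rw [← sum_add_distrib]
          refine sum_le_sum fun c _ => ?_
          rw [if_neg hj'.ne]
          have := abs_sub (W (u j) c - W v c) (W (u (j + 1)) c - W v c)
          rwa [sub_sub_sub_cancel_right] at this
        rw [div_le_iff₀ (by positivity)]
        have h4 : (6 * 2 ^ k / q + (pErr k v j / 2 ^ j + 2 * (pErr k v (j + 1) / 2 ^ (j + 1))))
            * 2 ^ j = 2 * (2 ^ (k + j) / q) + pErr k v j
              + (2 * (2 ^ (k + (j + 1)) / q) + pErr k v (j + 1)) := by
          have : (2 : ℝ) ^ j ≠ 0 := by positivity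
          rw [pow_succ, pow_add, pow_add, pow_add]
          field_simp
          ring
        rw [h4]
        linarith
      have htop : (∑ c ∈ box N, |W (u k) c - if k = k then 0 else W (u (k + 1)) c|) / 2 ^ k
          ≤ pErr k v k / 2 ^ k := by
        have h1 := sum_abs_wind_le (huW k)
        have h2 := huE k
        have h3 := hE0 k
        simp only [if_true, sub_zero]
        gcongr
        change ∑ c ∈ box N, |((wind (2 ^ k) (u k).1 (u k).2 c : ℤ) : ℝ)| ≤ _
        linarith
      have hS := sum_pErr_le hqr hk hv
      have hS1 := sum_range_succ (fun j => pErr k v j / 2 ^ j) k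
      have hS2 := sum_range_succ' (fun j => pErr k v j / 2 ^ j) k
      have hE00 : 0 ≤ pErr k v 0 / 2 ^ 0 := div_nonneg (hE0 0) (by positivity)
      change ∑ j ∈ range (k + 1),
        (∑ c ∈ box N, |W (u j) c - if j = k then 0 else W (u (j + 1)) c|) / 2 ^ j ≤ _
      rw [sum_range_succ]
      have h5 := sum_le_sum hlow
      rw [sum_add_distrib, sum_add_distrib, ← mul_sum, sum_const, card_range, nsmul_eq_mul] at h5
      have h6 : (k : ℝ) * (6 * 2 ^ k / q) ≤ 30 * q * 2 ^ k := by
        rw [mul_div_assoc', div_le_iff₀ hqr]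
        nlinarith [mul_le_mul_of_nonneg_right hk (show (0 : ℝ) ≤ 6 * 2 ^ k by positivity)]
      linarith
    · have hk' : (k : ℝ) ≤ 5 * (((q : ℕ) : ℤ) : ℝ) ^ 2 := by simpa using hk
      have h1 := sum_cost_code_le hq' hv.step1 hk'
      have h2 := sum_cost_code_le hq' hv.step2 hk'
      simp only [pcost, pcode, Nat.cast_add, mul_add, sum_add_distrib]
      push_cast at h1 h2
      linarith

/-! ### Bernstein's inequality -/

/-- Bernstein's inequality for a function of the cell containing a random point. The sets `Q c`
need not be disjoint, and the chosen cell `cell x` need not depend measurably on `x`: the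
exponential moment is taken of the majorant `∑ c, exp (θ f c) 1_{Q c}`. -/
lemma bernstein {Ω ι : Type*} [MeasurableSpace Ω] (μ : MeasureTheory.Measure Ω)
    [MeasureTheory.IsProbabilityMeasure μ] (n : ℕ) (C : Finset ι) (Q : ι → Set Ω)
    (hQ : ∀ c, MeasurableSet (Q c)) {p : ℝ} (hp : 0 ≤ p) (hμ : ∀ c ∈ C, μ.real (Q c) ≤ p)
    (hpC : p * C.card ≤ 1) (cell : Ω → ι) (Sq : Set Ω)
    (hcell : ∀ x ∈ Sq, cell x ∈ C ∧ x ∈ Q (cell x)) (f : ι → ℝ) (hf : ∀ c, |f c| ≤ 1)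
    {θ : ℝ} (hθ : 0 < θ) (hθ1 : θ ≤ 1) (h : ℝ) :
    (MeasureTheory.Measure.pi (fun _ : Fin n => μ)).real
      {ω | (∀ i, ω i ∈ Sq) ∧ n * p * ∑ c ∈ C, f c + θ * (n * p * ∑ c ∈ C, f c ^ 2) + h / θ
        < ∑ i, f (cell (ω i))} ≤ Real.exp (-h) := by
  classical
  set G : Ω → ℝ := fun x => ∑ c ∈ C, (Q c).indicator (fun _ => Real.exp (θ * f c)) x with hG
  have hG0 : ∀ x, 0 ≤ G x := fun x => sum_nonneg fun c _ =>
    Set.indicator_nonneg (fun _ _ => (Real.exp_pos _).le) _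
  have hGint : MeasureTheory.Integrable G μ := by
    refine MeasureTheory.integrable_finsetSum _ fun c _ => ?_
    exact (MeasureTheory.integrable_const _).indicator (hQ c)
  have hGval : ∫ x, G x ∂μ ≤ Real.exp (p * (θ * ∑ c ∈ C, f c + θ ^ 2 * ∑ c ∈ C, f c ^ 2)) := by
    have h1 : ∫ x, G x ∂μ = ∑ c ∈ C, μ.real (Q c) * Real.exp (θ * f c) := by
      rw [hG, MeasureTheory.integral_finsetSum]
      · refine sum_congr rfl fun c _ => ?_
        rw [MeasureTheory.integral_indicator_const _ (hQ c), smul_eq_mul]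
      · exact fun c _ => (MeasureTheory.integrable_const _).indicator (hQ c)
    have h2 : ∑ c ∈ C, μ.real (Q c) * Real.exp (θ * f c)
        ≤ ∑ c ∈ C, p * (1 + θ * f c + θ ^ 2 * f c ^ 2) := by
      refine sum_le_sum fun c hc => mul_le_mul (hμ c hc) ?_ (Real.exp_pos _).le hp
      have h3 : |θ * f c| ≤ 1 := by
        rw [abs_mul, abs_of_pos hθ]
        exact mul_le_one₀ hθ1 (abs_nonneg _) (hf c)
      have := (abs_le.1 (Real.abs_exp_sub_one_sub_id_le h3)).2
      rw [mul_pow] at this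
      linarith
    have h4 : ∑ c ∈ C, p * (1 + θ * f c + θ ^ 2 * f c ^ 2)
        = p * C.card + p * (θ * ∑ c ∈ C, f c + θ ^ 2 * ∑ c ∈ C, f c ^ 2) := by
      rw [← mul_sum, sum_add_distrib, sum_add_distrib, ← mul_sum, ← mul_sum]
      simp
      ring
    have h5 := Real.add_one_le_exp (p * (θ * ∑ c ∈ C, f c + θ ^ 2 * ∑ c ∈ C, f c ^ 2))
    linarith
  have hGcell : ∀ x ∈ Sq, Real.exp (θ * f (cell x)) ≤ G x := by
    intro x hx
    obtain ⟨h1, h2⟩ := hcell x hx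
    refine le_trans ?_ (single_le_sum (f := fun c =>
      (Q c).indicator (fun _ => Real.exp (θ * f c)) x) (fun c _ =>
      Set.indicator_nonneg (fun _ _ => (Real.exp_pos _).le) _) h1)
    rw [Set.indicator_of_mem h2]
  set P := MeasureTheory.Measure.pi (fun _ : Fin n => μ) with hP
  set S := ∑ c ∈ C, f c
  set V := ∑ c ∈ C, f c ^ 2
  set τ := n * p * S + θ * (n * p * V) + h / θ with hτ
  have hmar := MeasureTheory.mul_meas_ge_le_integral_of_nonneg (μ := P)
    (f := fun ω : Fin n → Ω => ∏ i, G (ω i))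
    (Filter.Eventually.of_forall fun ω => prod_nonneg fun i _ => hG0 _)
    (MeasureTheory.Integrable.fintype_prod (fun _ => hGint)) (Real.exp (θ * τ))
  have hI : ∫ ω, ∏ i, G (ω i) ∂P ≤ Real.exp (n * (p * (θ * S + θ ^ 2 * V))) := by
    rw [hP, MeasureTheory.integral_fintype_prod_eq_pow, Fintype.card_fin, Real.exp_nat_mul]
    exact pow_le_pow_left₀ (MeasureTheory.integral_nonneg hG0) hGval n
  have hsub : {ω : Fin n → Ω | (∀ i, ω i ∈ Sq) ∧ τ < ∑ i, f (cell (ω i))}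
      ⊆ {ω | Real.exp (θ * τ) ≤ ∏ i, G (ω i)} := by
    rintro ω ⟨h1, h2⟩
    simp only [Set.mem_ofPred_eq]
    calc Real.exp (θ * τ) ≤ Real.exp (θ * ∑ i, f (cell (ω i))) :=
          Real.exp_le_exp.2 (mul_le_mul_of_nonneg_left h2.le hθ.le)
      _ = ∏ i, Real.exp (θ * f (cell (ω i))) := by rw [mul_sum, Real.exp_sum]
      _ ≤ _ := prod_le_prod (fun i _ => (Real.exp_pos _).le) fun i _ => hGcell _ (h1 i)
  refine (MeasureTheory.measureReal_mono hsub).trans ?_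
  have h6 : Real.exp (θ * τ) * P.real {ω | Real.exp (θ * τ) ≤ ∏ i, G (ω i)}
      ≤ Real.exp (θ * τ) * Real.exp (-h) := by
    refine (hmar.trans hI).trans (le_of_eq ?_)
    rw [← Real.exp_add]
    congr 1
    rw [hτ]
    field_simp
    ring
  exact le_of_mul_le_mul_left h6 (Real.exp_pos _)

/-! ### The event of small discrepancy -/

/-- The event that a cell sum of `f` exceeds its mean by the Bernstein bound with parameter `θ`
and exponent `h`. -/
def devSet {Ω : Type*} (n : ℕ) (p : ℝ) (C : Finset (ℤ × ℤ)) (cell : Ω → ℤ × ℤ) (Sq : Set Ω)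
    (θ h : ℝ) (f : ℤ × ℤ → ℝ) : Set (Fin n → Ω) :=
  {ω | (∀ i, ω i ∈ Sq) ∧ n * p * ∑ c ∈ C, f c + θ * (n * p * ∑ c ∈ C, f c ^ 2) + h / θ
        < ∑ i, f (cell (ω i))}

/-- With high probability, all winding functions of closed walks have small discrepancy. The
walks are coded with `q = 4 ^ r`, so that up to `5 q²` scales are allowed. -/
lemma good_event {Ω : Type*} [MeasurableSpace Ω] (μ : MeasureTheory.Measure Ω)
    [MeasureTheory.IsProbabilityMeasure μ] (n N r : ℕ) (Q : ℤ × ℤ → Set Ω)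
    (hQ : ∀ c, MeasurableSet (Q c)) {p : ℝ} (hp : 0 ≤ p) (hμ : ∀ c ∈ box N, μ.real (Q c) ≤ p)
    (hpC : p * (box N).card ≤ 1) (cell : Ω → ℤ × ℤ) (Sq : Set Ω)
    (hcell : ∀ x ∈ Sq, cell x ∈ box N ∧ x ∈ Q (cell x)) {s : ℝ} (hs : 2 ^ r ≤ s)
    (hnp : n * p ≤ 4 * s ^ 2) :
    ∃ Bad : Set (Fin n → Ω),
      (MeasureTheory.Measure.pi (fun _ : Fin n => μ)).real Bad ≤
        2 * (5 * 16 ^ r + 1) ^ 2 * (4 ^ r * N + 1) ^ 2 * Real.exp (-(8 * 16 ^ r)) ∧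
      ∀ ω ∉ Bad, (∀ i, ω i ∈ Sq) → ∀ k ≤ 5 * 16 ^ r, ∀ v, IsWalk N k v →
        |∑ i, ((wind (2 ^ k) v.1 v.2 (cell (ω i)) : ℤ) : ℝ)
          - n * p * ∑ c ∈ box N, ((wind (2 ^ k) v.1 v.2 c : ℤ) : ℝ)| ≤ 264 * s * 8 ^ r * 2 ^ k := by
  classical
  have hspos : 0 < s := lt_of_lt_of_le (by positivity) hs
  have h416 : ((4 ^ r : ℕ) : ℝ) ^ 2 = 16 ^ r := by
    push_cast; rw [← pow_mul, mul_comm, pow_mul]; norm_num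
  have hch : ∀ k, ∃ g : ℕ → (ℕ → ℤ) × (ℕ → ℤ) → ℤ × ℤ → ℝ, k ≤ 5 * 16 ^ r →
      (∀ j, ∀ x ∈ codes N k (4 ^ r : ℕ) j, ∀ c, |g j x c| ≤ 1) ∧
      ∀ v, IsWalk N k v →
        (∀ c, ((wind (2 ^ k) v.1 v.2 c : ℤ) : ℝ) =
          ∑ j ∈ range (k + 1), g j (pcode (4 ^ r : ℕ) j v) c) ∧
        ∑ j ∈ range (k + 1), (∑ c ∈ box N, |g j (pcode (4 ^ r : ℕ) j v) c|) / 2 ^ j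
          ≤ 48 * (4 ^ r : ℕ) * 2 ^ k ∧
        ∑ j ∈ range (k + 1), 2 ^ j * (pcost k j (pcode (4 ^ r : ℕ) j v) : ℝ)
          ≤ 56 * ((4 ^ r : ℕ) : ℝ) ^ 2 * 2 ^ k := by
    intro k
    by_cases hk : k ≤ 5 * 16 ^ r
    · obtain ⟨g, hg⟩ := exists_chain N k (4 ^ r) (by positivity) (by
        rw [h416]; exact_mod_cast hk)
      exact ⟨g, fun _ => hg⟩
    · exact ⟨fun _ _ _ => 0, fun h => absurd h hk⟩
  choose g hg using hch
  -- the `L¹` norms with weights `2 ^ (-j)` add up to `O(q 2 ^ k)` and the exponents with weights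
  -- `2 ^ j` to `O(q² 2 ^ k)`; for this choice of `θ`, the variance terms and the exponent terms
  -- both add up to `O(s 8 ^ r 2 ^ k)`
  set θ : ℕ → ℝ := fun j => 2 ^ r / (s * 2 ^ j) with hθ
  have hθ0 : ∀ j, 0 < θ j := fun j => by positivity
  have hθ1 : ∀ j, θ j ≤ 1 := by
    intro j
    rw [hθ, div_le_one (by positivity)]
    have : (1 : ℝ) ≤ 2 ^ j := one_le_pow₀ (by norm_num)
    nlinarith
  set H : ℕ → ℕ → (ℕ → ℤ) × (ℕ → ℤ) → ℝ := fun k j x => pcost k j x + 8 * 16 ^ r with hH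
  set A : ℕ → ℕ → (ℕ → ℤ) × (ℕ → ℤ) → Set (Fin n → Ω) := fun k j x =>
    devSet n p (box N) cell Sq (θ j) (H k j x) (g k j x) ∪
      devSet n p (box N) cell Sq (θ j) (H k j x) (fun c => -g k j x c) with hA
  set P := MeasureTheory.Measure.pi (fun _ : Fin n => μ) with hP
  refine ⟨⋃ k ∈ range (5 * 16 ^ r + 1), ⋃ j ∈ range (k + 1),
    ⋃ x ∈ codes N k (4 ^ r : ℕ) j, A k j x, ?_, ?_⟩
  · have hAP : ∀ k ∈ range (5 * 16 ^ r + 1), ∀ j ∈ range (k + 1), ∀ x ∈ codes N k (4 ^ r : ℕ) j,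
        P.real (A k j x) ≤ 2 * Real.exp (-(8 * 16 ^ r)) * (1 / 2) ^ pcost k j x := by
      intro k hk j hj x hx
      have hk' : k ≤ 5 * 16 ^ r := Nat.lt_succ_iff.1 (mem_range.1 hk)
      have hb := (hg k hk').1 j x hx
      have h1 : P.real (devSet n p (box N) cell Sq (θ j) (H k j x) (g k j x)) ≤ _ :=
        bernstein μ n (box N) Q hQ hp hμ hpC cell Sq hcell (g k j x) hb
          (hθ0 j) (hθ1 j) (H k j x)
      have h2 : P.real (devSet n p (box N) cell Sq (θ j) (H k j x) (fun c => -g k j x c)) ≤ _ :=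
        bernstein μ n (box N) Q hQ hp hμ hpC cell Sq hcell (fun c => -g k j x c)
          (fun c => by rw [abs_neg]; exact hb c) (hθ0 j) (hθ1 j) (H k j x)
      have h3 : Real.exp (-H k j x) ≤ Real.exp (-(8 * 16 ^ r)) * (1 / 2) ^ pcost k j x := by
        rw [hH, neg_add, Real.exp_add, mul_comm]
        gcongr
        rw [← mul_one (pcost k j x : ℝ), ← mul_neg, Real.exp_nat_mul]
        refine pow_le_pow_left₀ (Real.exp_pos _).le ?_ _
        rw [Real.exp_neg, one_div]
        refine inv_anti₀ (by norm_num) ?_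
        have := Real.add_one_le_exp (1 : ℝ)
        linarith
      have h4 := MeasureTheory.measureReal_union_le (μ := P)
        (devSet n p (box N) cell Sq (θ j) (H k j x) (g k j x))
        (devSet n p (box N) cell Sq (θ j) (H k j x) (fun c => -g k j x c))
      change P.real (_ ∪ _) ≤ _
      linarith
    have hB : (0 : ℝ) ≤ 2 * Real.exp (-(8 * 16 ^ r)) * (4 ^ r * N + 1) ^ 2 := by positivity
    have h1 : ∀ k ∈ range (5 * 16 ^ r + 1), ∀ j ∈ range (k + 1),
        P.real (⋃ x ∈ codes N k (4 ^ r : ℕ) j, A k j x)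
          ≤ 2 * Real.exp (-(8 * 16 ^ r)) * (4 ^ r * N + 1) ^ 2 := by
      intro k hk j hj
      refine (MeasureTheory.measureReal_biUnion_finset_le _ _).trans ?_
      refine (sum_le_sum (hAP k hk j hj)).trans ?_
      rw [← mul_sum]
      have := kraft_codes N k (4 ^ r) j (Nat.lt_succ_iff.1 (mem_range.1 hj))
      have h4 : (((4 ^ r : ℕ) : ℝ) * N + 1) = 4 ^ r * N + 1 := by push_cast; ring
      rw [h4] at this
      gcongr
    have h2 : ∀ k ∈ range (5 * 16 ^ r + 1),
        P.real (⋃ j ∈ range (k + 1), ⋃ x ∈ codes N k (4 ^ r : ℕ) j, A k j x)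
          ≤ (5 * 16 ^ r + 1) * (2 * Real.exp (-(8 * 16 ^ r)) * (4 ^ r * N + 1) ^ 2) := by
      intro k hk
      refine (MeasureTheory.measureReal_biUnion_finset_le _ _).trans ?_
      refine (sum_le_sum (h1 k hk)).trans ?_
      rw [sum_const, card_range, nsmul_eq_mul]
      refine mul_le_mul_of_nonneg_right ?_ hB
      have : k + 1 ≤ 5 * 16 ^ r + 1 := mem_range.1 hk
      exact_mod_cast this
    refine (MeasureTheory.measureReal_biUnion_finset_le _ _).trans ?_
    refine (sum_le_sum h2).trans (le_of_eq ?_)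
    rw [sum_const, card_range, nsmul_eq_mul]
    push_cast
    ring
  · intro ω hω hSq k hk v hv
    obtain ⟨hw, hL, hC⟩ := (hg k hk).2 v hv
    set x : ℕ → (ℕ → ℤ) × (ℕ → ℤ) := fun j => pcode (4 ^ r : ℕ) j v with hx
    have hnA : ∀ j ∈ range (k + 1), ω ∉ A k j (x j) := by
      intro j hj hmem
      refine hω ?_
      simp only [Set.mem_iUnion]
      exact ⟨k, mem_range.2 (Nat.lt_succ_iff.2 hk), j, hj, x j, mem_codes.2 ⟨v, hv, rfl⟩, hmem⟩
    set Z : ℕ → ℝ := fun j => ∑ i, g k j (x j) (cell (ω i))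
      - n * p * ∑ c ∈ box N, g k j (x j) c with hZ
    have hnp0 : 0 ≤ n * p := by positivity
    have hZb : ∀ j ∈ range (k + 1), |Z j| ≤ θ j * (4 * s ^ 2 * ∑ c ∈ box N, |g k j (x j) c|)
        + H k j (x j) / θ j := by
      intro j hj
      have h0 := hnA j hj
      simp only [hA, Set.mem_union, not_or, devSet, Set.mem_ofPred_eq, not_and, not_lt] at h0
      have h1 := h0.1 hSq
      have h2 := h0.2 hSq
      simp only [sum_neg_distrib, mul_neg, neg_sq] at h2
      have hsq : ∑ c ∈ box N, g k j (x j) c ^ 2 ≤ ∑ c ∈ box N, |g k j (x j) c| := by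
        refine sum_le_sum fun c _ => ?_
        have hb := (hg k hk).1 j (x j) (mem_codes.2 ⟨v, hv, rfl⟩) c
        rw [← sq_abs]
        nlinarith [abs_nonneg (g k j (x j) c)]
      have h3 : θ j * (n * p * ∑ c ∈ box N, g k j (x j) c ^ 2)
          ≤ θ j * (4 * s ^ 2 * ∑ c ∈ box N, |g k j (x j) c|) := by
        refine mul_le_mul_of_nonneg_left ?_ (hθ0 j).le
        exact mul_le_mul hnp hsq (sum_nonneg fun _ _ => sq_nonneg _) (by positivity)
      rw [abs_le]
      constructor <;> simp only [hZ] <;> linarith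
    have hdec : ∑ i, ((wind (2 ^ k) v.1 v.2 (cell (ω i)) : ℤ) : ℝ)
          - n * p * ∑ c ∈ box N, ((wind (2 ^ k) v.1 v.2 c : ℤ) : ℝ)
        = ∑ j ∈ range (k + 1), Z j := by
      simp only [hw, hZ, sum_sub_distrib, ← mul_sum]
      rw [sum_comm, sum_comm (s := box N)]
    rw [hdec]
    refine (abs_sum_le_sum_abs _ _).trans ((sum_le_sum hZb).trans ?_)
    rw [sum_add_distrib]
    have e1 : ∑ j ∈ range (k + 1), θ j * (4 * s ^ 2 * ∑ c ∈ box N, |g k j (x j) c|)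
        = 4 * s * 2 ^ r * ∑ j ∈ range (k + 1), (∑ c ∈ box N, |g k j (x j) c|) / 2 ^ j := by
      rw [mul_sum]
      refine sum_congr rfl fun j _ => ?_
      simp only [hθ]
      field_simp
    have e2 : ∑ j ∈ range (k + 1), H k j (x j) / θ j
        = s / 2 ^ r * (∑ j ∈ range (k + 1), 2 ^ j * (pcost k j (x j) : ℝ)
          + 8 * 16 ^ r * ∑ j ∈ range (k + 1), 2 ^ j) := by
      rw [mul_sum, ← sum_add_distrib, mul_sum]
      refine sum_congr rfl fun j _ => ?_
      simp only [hθ, hH]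
      field_simp
    have e3 : ∑ j ∈ range (k + 1), (2 : ℝ) ^ j ≤ 2 * 2 ^ k := by
      have := geom_sum_mul (2 : ℝ) (k + 1)
      rw [pow_succ] at this
      linarith
    have e8 : (2 : ℝ) ^ r * 4 ^ r = 8 ^ r := by rw [← mul_pow]; norm_num
    have e16 : (16 : ℝ) ^ r = 8 ^ r * 2 ^ r := by rw [← mul_pow]; norm_num
    rw [e1, e2]
    have f1 : 4 * s * 2 ^ r * ∑ j ∈ range (k + 1), (∑ c ∈ box N, |g k j (x j) c|) / 2 ^ j
        ≤ 192 * s * 8 ^ r * 2 ^ k := by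
      refine (mul_le_mul_of_nonneg_left hL (by positivity)).trans (le_of_eq ?_)
      push_cast
      rw [← e8]; ring
    have f2 : s / 2 ^ r * (∑ j ∈ range (k + 1), 2 ^ j * (pcost k j (x j) : ℝ)
          + 8 * 16 ^ r * ∑ j ∈ range (k + 1), 2 ^ j) ≤ 72 * s * 8 ^ r * 2 ^ k := by
      have : s / 2 ^ r * (56 * 16 ^ r * 2 ^ k + 8 * 16 ^ r * (2 * 2 ^ k))
          = 72 * s * 8 ^ r * 2 ^ k := by
        rw [e16]; field_simp; ring
      rw [← this]
      rw [h416] at hC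
      gcongr
    linarith

/-! ### Boundary edges and total variation -/

/-- The jump of `f` across a lattice edge: `(x, y, false)` is the edge from `(x, y)` to
`(x + 1, y)` and `(x, y, true)` the edge from `(x, y)` to `(x, y + 1)`; the jump is the value
on the left of the edge minus the value on its right. -/
def jump (f : ℤ × ℤ → ℤ) (p : ℤ × ℤ × Bool) : ℤ :=
  if p.2.2 then f (p.1 - 1, p.2.1) - f (p.1, p.2.1) else f (p.1, p.2.1) - f (p.1, p.2.1 - 1)

/-- The edges of the lattice square `[0, N]²` (and a few edges that stick out of it). -/
noncomputable def edges (N : ℕ) : Finset (ℤ × ℤ × Bool) :=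
  Icc (0 : ℤ) N ×ˢ Icc (0 : ℤ) N ×ˢ univ

/-- The total variation, that is, the perimeter if `f` is an indicator function. -/
noncomputable def tv (N : ℕ) (f : ℤ × ℤ → ℤ) : ℕ := ∑ p ∈ edges N, (jump f p).natAbs

/-- The initial vertex of an edge, when the edge is oriented so as to have positive jump. -/
def src (f : ℤ × ℤ → ℤ) (p : ℤ × ℤ × Bool) : ℤ × ℤ :=
  if jump f p = 1 then (p.1, p.2.1) else if p.2.2 then (p.1, p.2.1 + 1) else (p.1 + 1, p.2.1)

/-- The final vertex of an edge, when the edge is oriented so as to have positive jump. -/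
def tgt (f : ℤ × ℤ → ℤ) (p : ℤ × ℤ × Bool) : ℤ × ℤ :=
  if jump f p = 1 then (if p.2.2 then (p.1, p.2.1 + 1) else (p.1 + 1, p.2.1)) else (p.1, p.2.1)

lemma mem_box {N : ℕ} {c : ℤ × ℤ} : c ∈ box N ↔ (0 ≤ c.1 ∧ c.1 < N) ∧ 0 ≤ c.2 ∧ c.2 < N := by
  simp [box]

lemma jump_sub (f g : ℤ × ℤ → ℤ) (p : ℤ × ℤ × Bool) :
    jump (f - g) p = jump f p - jump g p := by
  unfold jump
  split_ifs <;> simp only [Pi.sub_apply] <;> ring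

lemma mem_edges_of_jump {N : ℕ} {f : ℤ × ℤ → ℤ} (hf : ∀ c, c ∉ box N → f c = 0)
    {p : ℤ × ℤ × Bool} (hp : jump f p ≠ 0) : p ∈ edges N := by
  obtain ⟨x, y, β⟩ := p
  by_contra h
  simp only [edges, mem_product, mem_Icc, mem_univ, and_true, not_and_or, not_le] at h
  apply hp
  cases β
  · have h1 : (x, y) ∉ box N := by rw [mem_box]; dsimp only; omega
    have h2 : (x, y - 1) ∉ box N := by rw [mem_box]; dsimp only; omega
    simp [jump, hf _ h1, hf _ h2]
  · have h1 : (x, y) ∉ box N := by rw [mem_box]; dsimp only; omega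
    have h2 : (x - 1, y) ∉ box N := by rw [mem_box]; dsimp only; omega
    simp [jump, hf _ h1, hf _ h2]

lemma src_mem {N : ℕ} {f : ℤ × ℤ → ℤ} (hf : ∀ c, c ∉ box N → f c = 0)
    {p : ℤ × ℤ × Bool} (hp : jump f p ≠ 0) :
    (0 ≤ (src f p).1 ∧ (src f p).1 ≤ N) ∧ 0 ≤ (src f p).2 ∧ (src f p).2 ≤ N := by
  have h := mem_edges_of_jump hf hp
  obtain ⟨x, y, β⟩ := p
  simp only [edges, mem_product, mem_Icc, mem_univ, and_true] at h
  cases β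
  · have h3 : x < N := by
      by_contra hx
      apply hp
      have h1 : (x, y) ∉ box N := by rw [mem_box]; dsimp only; omega
      have h2 : (x, y - 1) ∉ box N := by rw [mem_box]; dsimp only; omega
      simp [jump, hf _ h1, hf _ h2]
    unfold src
    split_ifs <;> dsimp only at * <;> omega
  · have h3 : y < N := by
      by_contra hx
      apply hp
      have h1 : (x, y) ∉ box N := by rw [mem_box]; dsimp only; omega
      have h2 : (x - 1, y) ∉ box N := by rw [mem_box]; dsimp only; omega
      simp [jump, hf _ h1, hf _ h2]
    unfold src
    split_ifs <;> dsimp only at * <;> first | omega | simp_all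

/-- A function without jumps is constant along rows, and it vanishes to the left of the box. -/
lemma eq_zero_of_jump {N : ℕ} {f : ℤ × ℤ → ℤ} (hf : ∀ c, c ∉ box N → f c = 0)
    (h : ∀ p, jump f p = 0) : f = 0 := by
  have h1 : ∀ x : ℤ, ∀ n : ℕ, f (x, (n : ℤ) - 1) = 0 := by
    intro x n
    induction n with
    | zero => exact hf _ (by rw [mem_box]; simp)
    | succ n ih =>
      have := h (x, n, false)
      simp only [jump] at this
      simp only [Bool.false_eq_true, if_false] at this
      push_cast
      rw [show ((n : ℤ) + 1 - 1) = n by ring]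
      linarith
  funext c
  by_cases hc : c ∈ box N
  · rw [mem_box] at hc
    have := h1 c.1 (c.2 + 1).toNat
    rw [Int.toNat_of_nonneg (by omega)] at this
    simpa using this
  · exact hf c hc

lemma tv_pos {N : ℕ} {f : ℤ × ℤ → ℤ} (hf : ∀ c, c ∉ box N → f c = 0) (h : f ≠ 0) :
    0 < tv N f := by
  by_contra h0
  apply h
  refine eq_zero_of_jump hf fun p => ?_
  by_contra hp
  have h1 := mem_edges_of_jump hf hp
  have h2 : (jump f p).natAbs ≤ tv N f :=
    single_le_sum (f := fun p => (jump f p).natAbs) (fun _ _ => Nat.zero_le _) h1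
  omega

/-- A boundary edge can be continued at its final vertex, keeping the region on the left. -/
lemma exists_next {f : ℤ × ℤ → ℤ} (h01 : ∀ c, f c = 0 ∨ f c = 1) {p : ℤ × ℤ × Bool}
    (hp : jump f p ≠ 0) : ∃ p', jump f p' ≠ 0 ∧ src f p' = tgt f p := by
  obtain ⟨u, v, huv⟩ : ∃ u v, tgt f p = (u, v) := ⟨_, _, rfl⟩
  -- the jumps at the four edges which meet in `(u, v)` have a vanishing signed sum
  have key : jump f (u, v, false) = 1 ∨ jump f (u - 1, v, false) = -1 ∨
      jump f (u, v, true) = 1 ∨ jump f (u, v - 1, true) = -1 := by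
    obtain ⟨x, y, β⟩ := p
    have a1 := h01 (u, v)
    have a2 := h01 (u - 1, v)
    have a3 := h01 (u, v - 1)
    have a4 := h01 (u - 1, v - 1)
    have b1 := h01 (x, y)
    have b2 := h01 (x - 1, y)
    have b3 := h01 (x, y - 1)
    unfold tgt at huv
    cases β
    · simp only [jump, Bool.false_eq_true, if_false, if_true] at hp huv ⊢
      split_ifs at huv with hj
      · obtain ⟨rfl, rfl⟩ := Prod.mk.inj huv
        rw [show x + 1 - 1 = x by ring] at *
        omega
      · obtain ⟨rfl, rfl⟩ := Prod.mk.inj huv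
        omega
    · simp only [jump, Bool.false_eq_true, if_false, if_true] at hp huv ⊢
      split_ifs at huv with hj
      · obtain ⟨rfl, rfl⟩ := Prod.mk.inj huv
        rw [show y + 1 - 1 = y by ring] at *
        omega
      · obtain ⟨rfl, rfl⟩ := Prod.mk.inj huv
        omega
  rw [huv]
  rcases key with h | h | h | h
  · exact ⟨_, by rw [h]; decide, by simp [src, h]⟩
  · exact ⟨_, by rw [h]; decide, by simp [src, h]⟩
  · exact ⟨_, by rw [h]; decide, by simp [src, h]⟩
  · exact ⟨_, by rw [h]; decide, by simp [src, h]⟩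

lemma jump_eq_of_01 {f : ℤ × ℤ → ℤ} (h01 : ∀ c, f c = 0 ∨ f c = 1) {p : ℤ × ℤ × Bool}
    (hp : jump f p ≠ 0) : jump f p = 1 ∨ jump f p = -1 := by
  have b1 := h01 (p.1, p.2.1)
  have b2 := h01 (p.1 - 1, p.2.1)
  have b3 := h01 (p.1, p.2.1 - 1)
  unfold jump at *
  split_ifs at * <;> omega

/-- The jump of a winding function across an edge counts the signed passages through it. -/
lemma jump_wind {f : ℤ × ℤ → ℤ} {T : ℕ} {a b : ℕ → ℤ} {e : ℕ → ℤ × ℤ × Bool}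
    (h01 : ∀ c, f c = 0 ∨ f c = 1) (he : ∀ t, jump f (e t) ≠ 0)
    (hs : ∀ t < T, (a t, b t) = src f (e t)) (ht : ∀ t < T, (a (t + 1), b (t + 1)) = tgt f (e t))
    (ha : a T = a 0) (hb : b T = b 0) (p : ℤ × ℤ × Bool) :
    jump (wind T a b) p = ∑ t ∈ range T, if e t = p then jump f p else 0 := by
  obtain ⟨x, y, β⟩ := p
  cases β
  · simp only [jump, wind, Bool.false_eq_true, if_false]
    rw [← sum_sub_distrib]
    refine sum_congr rfl fun t hT => ?_
    have h1 := hs t (mem_range.1 hT)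
    have h2 := ht t (mem_range.1 hT)
    have h3 := jump_eq_of_01 h01 (he t)
    have h4 : e t = (x, y, false) → jump f (e t) = f (x, y) - f (x, y - 1) := by
      intro h; rw [h]; simp [jump]
    generalize e t = p' at h1 h2 h3 h4 ⊢
    obtain ⟨x', y', β'⟩ := p'
    simp only [src, tgt] at h1 h2
    rcases h3 with h3 | h3 <;> cases β' <;>
    · simp only [h3, if_true, Bool.false_eq_true, if_false, Prod.mk.injEq, and_true, and_false,
        Int.reduceNeg, reduceCtorEq, show ((-1 : ℤ) = 1) = False by simp] at h1 h2 h4 ⊢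
      rw [h1.1, h1.2, h2.1]
      split_ifs <;> omega
  · simp only [jump, wind, if_true]
    rw [← sum_sub_distrib]
    have tel := sum_range_sub (fun t => (if b t ≤ y then (1 : ℤ) else 0) *
      ((if x - 1 < a t then 1 else 0) - (if x < a t then 1 else 0))) T
    rw [ha, hb, sub_self] at tel
    rw [← sub_eq_zero, ← sum_sub_distrib]
    refine (sum_congr rfl fun t hT => ?_).trans tel
    have h1 := hs t (mem_range.1 hT)
    have h2 := ht t (mem_range.1 hT)
    have h3 := jump_eq_of_01 h01 (he t)
    have h4 : e t = (x, y, true) → jump f (e t) = f (x - 1, y) - f (x, y) := by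
      intro h; rw [h]; simp [jump]
    generalize e t = p' at h1 h2 h3 h4 ⊢
    obtain ⟨x', y', β'⟩ := p'
    simp only [src, tgt] at h1 h2
    rcases h3 with h3 | h3 <;> cases β' <;>
    · simp only [h3, if_true, Bool.false_eq_true, if_false, Prod.mk.injEq, and_true, and_false,
        Int.reduceNeg, show ((-1 : ℤ) = 1) = False by simp] at h1 h2 h4 ⊢
      rw [h1.1, h1.2, h2.1, h2.2]
      split_ifs <;> omega

/-! ### Decomposition into loops -/

/-- Closed walks of length `ℓ` in `[0, N]²`, extended by a constant. -/
structure IsLoop (N ℓ : ℕ) (a b : ℕ → ℤ) : Prop where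
  mem1 : ∀ t, 0 ≤ a t ∧ a t ≤ N
  mem2 : ∀ t, 0 ≤ b t ∧ b t ≤ N
  step1 : ∀ t, |a (t + 1) - a t| ≤ 1
  step2 : ∀ t, |b (t + 1) - b t| ≤ 1
  const1 : ∀ t, ℓ ≤ t → a t = a 0
  const2 : ∀ t, ℓ ≤ t → b t = b 0

lemma abs_src_sub_tgt (f : ℤ × ℤ → ℤ) (p : ℤ × ℤ × Bool) :
    |(tgt f p).1 - (src f p).1| ≤ 1 ∧ |(tgt f p).2 - (src f p).2| ≤ 1 := by
  unfold src tgt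
  split_ifs <;> simp

/-- The boundary of a nonempty region contains a closed trail. It is found by following
boundary edges, with the region on the left, until an edge is repeated. -/
lemma exists_loop {N : ℕ} {f : ℤ × ℤ → ℤ} (hf : ∀ c, c ∉ box N → f c = 0)
    (h01 : ∀ c, f c = 0 ∨ f c = 1) (hne : f ≠ 0) :
    ∃ ℓ a b, 0 < ℓ ∧ ℓ ≤ tv N f ∧ ℓ ≤ 2 * (N + 1) ^ 2 ∧ IsLoop N ℓ a b ∧
      wind ℓ a b ≠ 0 ∧ ∀ p, jump (wind ℓ a b) p = jump f p ∨ jump (wind ℓ a b) p = 0 := by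
  classical
  set E := (edges N).filter (fun p => jump f p ≠ 0) with hE
  have hmemE : ∀ p, p ∈ E ↔ jump f p ≠ 0 := fun p =>
    ⟨fun h => (mem_filter.1 h).2, fun h => mem_filter.2 ⟨mem_edges_of_jump hf h, h⟩⟩
  have hnx : ∀ p, ∃ p', jump f p ≠ 0 → jump f p' ≠ 0 ∧ src f p' = tgt f p := by
    intro p
    by_cases hp : jump f p ≠ 0
    · obtain ⟨p', hp'⟩ := exists_next h01 hp
      exact ⟨p', fun _ => hp'⟩
    · exact ⟨p, fun h => absurd h hp⟩
  choose nx hnx using hnx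
  obtain ⟨p0, hp0⟩ : ∃ p, jump f p ≠ 0 := by
    by_contra h
    push Not at h
    exact hne (eq_zero_of_jump hf h)
  have hit : ∀ p, jump f p ≠ 0 → ∀ n, jump f (nx^[n] p) ≠ 0 := by
    intro p hp n
    induction n with
    | zero => exact hp
    | succ n ih => rw [Function.iterate_succ_apply']; exact (hnx _ ih).1
  obtain ⟨p, hp, n, hn, hper⟩ : ∃ p, jump f p ≠ 0 ∧ ∃ n, 0 < n ∧ nx^[n] p = p := by
    obtain ⟨i, j, hij, h⟩ := Finite.exists_ne_map_eq_of_infinite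
      (fun n : ℕ => (⟨nx^[n] p0, (hmemE _).2 (hit p0 hp0 n)⟩ : E))
    have h' : nx^[i] p0 = nx^[j] p0 := congrArg Subtype.val h
    rcases lt_or_gt_of_ne hij with hlt | hlt
    · refine ⟨nx^[i] p0, hit p0 hp0 i, j - i, by omega, ?_⟩
      rw [← Function.iterate_add_apply, show j - i + i = j by omega, h']
    · refine ⟨nx^[j] p0, hit p0 hp0 j, i - j, by omega, ?_⟩
      rw [← Function.iterate_add_apply, show i - j + j = i by omega, h']
  have hpp : Function.IsPeriodicPt nx n p := hper
  set ℓ := Function.minimalPeriod nx p with hℓ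
  have hℓ0 : 0 < ℓ := hpp.minimalPeriod_pos hn
  have hℓp : nx^[ℓ] p = p := Function.isPeriodicPt_minimalPeriod nx p
  have hinj : Set.InjOn (fun t => nx^[t] p) (Set.Iio ℓ) :=
    Function.iterate_injOn_Iio_minimalPeriod
  set e : ℕ → ℤ × ℤ × Bool := fun t => nx^[t] p with he
  have hej : ∀ t, jump f (e t) ≠ 0 := hit p hp
  set v : ℕ → ℤ × ℤ := fun t => src f (e (min t ℓ)) with hv
  have hstep : ∀ t, v (t + 1) = v t ∨ ∃ q, v t = src f q ∧ v (t + 1) = tgt f q := by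
    intro t
    by_cases ht : t < ℓ
    · right
      refine ⟨e t, ?_, ?_⟩
      · simp only [hv, min_eq_left ht.le]
      · simp only [hv, min_eq_left (show t + 1 ≤ ℓ from ht)]
        simp only [he, Function.iterate_succ_apply']
        exact (hnx _ (hej t)).2
    · left
      simp only [hv, min_eq_right (not_lt.1 ht), min_eq_right (show ℓ ≤ t + 1 by omega)]
  have hs : ∀ t < ℓ, v t = src f (e t) := by
    intro t ht
    simp only [hv, min_eq_left ht.le]
  have ht : ∀ t < ℓ, v (t + 1) = tgt f (e t) := by
    intro t ht
    simp only [hv, min_eq_left (show t + 1 ≤ ℓ from ht)]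
    simp only [he, Function.iterate_succ_apply']
    exact (hnx _ (hej t)).2
  have hcl : ∀ t, ℓ ≤ t → v t = v 0 := by
    intro t h
    simp only [hv, min_eq_right h, Nat.zero_min]
    simp only [he, hℓp, Function.iterate_zero, id]
  have hjw := jump_wind h01 hej (T := ℓ) (a := fun t => (v t).1) (b := fun t => (v t).2) hs ht
    (congrArg Prod.fst (hcl ℓ le_rfl)) (congrArg Prod.snd (hcl ℓ le_rfl))
  have hcard : ℓ ≤ E.card := by
    have := card_le_card_of_injOn (s := range ℓ) (t := E) (fun t => nx^[t] p)
      (fun t _ => (hmemE _).2 (hej t)) (by simpa using hinj)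
    simpa using this
  refine ⟨ℓ, fun t => (v t).1, fun t => (v t).2, hℓ0, ?_, ?_, ?_, ?_, ?_⟩
  · refine hcard.trans ?_
    unfold tv
    rw [card_eq_sum_ones]
    refine (sum_le_sum fun q hq => ?_).trans (sum_le_sum_of_subset (filter_subset _ _))
    exact Int.natAbs_pos.2 ((hmemE q).1 hq)
  · refine hcard.trans ((card_filter_le _ _).trans (le_of_eq ?_))
    simp only [edges, card_product, Int.card_Icc, card_univ, Fintype.card_bool]
    rw [show ((N : ℤ) + 1 - 0).toNat = N + 1 by omega]
    ring
  · refine ⟨fun t => (src_mem hf (hej _)).1, fun t => (src_mem hf (hej _)).2, fun t => ?_,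
      fun t => ?_, fun t h => congrArg Prod.fst (hcl t h), fun t h => congrArg Prod.snd (hcl t h)⟩
    · rcases hstep t with h | ⟨q, h1, h2⟩
      · simp [h]
      · rw [h1, h2]; exact (abs_src_sub_tgt f q).1
    · rcases hstep t with h | ⟨q, h1, h2⟩
      · simp [h]
      · rw [h1, h2]; exact (abs_src_sub_tgt f q).2
  · intro h0
    have h1 := hjw p
    rw [h0, sum_eq_single 0] at h1
    · have h2 : jump (0 : ℤ × ℤ → ℤ) p = 0 := by simp [jump]
      rw [h2, if_pos (show e 0 = p from rfl)] at h1
      exact hp h1.symm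
    · intro t htl ht0
      refine if_neg fun htp => ht0 ?_
      exact hinj (mem_range.1 htl) hℓ0 htp
    · intro h
      exact absurd (mem_range.2 hℓ0) h
  · intro q
    rw [hjw q]
    by_cases hq : ∃ t < ℓ, e t = q
    · obtain ⟨t, htl, rfl⟩ := hq
      left
      rw [sum_eq_single t, if_pos rfl]
      · intro t' ht' hne'
        exact if_neg fun h => hne' (hinj (mem_range.1 ht') htl h)
      · intro h
        exact absurd (mem_range.2 htl) h
    · right
      refine sum_eq_zero fun t htl => if_neg fun h => hq ⟨t, mem_range.1 htl, h⟩

lemma tv_add_of_jump {N : ℕ} {f g : ℤ × ℤ → ℤ}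
    (h : ∀ p, (jump f p).natAbs = (jump g p).natAbs + (jump (f - g) p).natAbs) :
    tv N f = tv N g + tv N (f - g) := by
  unfold tv
  rw [← sum_add_distrib]
  exact sum_congr rfl fun p _ => h p

/-- An additive functional which is bounded by `B ℓ` on winding functions of loops of length `ℓ`
is bounded by `B` times the total variation: every integer valued function supported in the box
is a signed sum of winding functions, with values `0` and `1`, of loops whose lengths add up to
at most its total variation. -/
lemma le_tv_of_loops {N : ℕ} {B : ℝ} (hB : 0 ≤ B) (X : (ℤ × ℤ → ℤ) → ℝ)
    (hX : ∀ f g, X (f + g) = X f + X g)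
    (hloop : ∀ ℓ a b, 0 < ℓ → ℓ ≤ 2 * (N + 1) ^ 2 → IsLoop N ℓ a b →
      (∀ c, wind ℓ a b c = 0 ∨ wind ℓ a b c = 1) → |X (wind ℓ a b)| ≤ B * ℓ)
    (f : ℤ × ℤ → ℤ) (hf : ∀ c, c ∉ box N → f c = 0) : |X f| ≤ B * tv N f := by
  have hX0 : X 0 = 0 := by
    have := hX 0 0
    rw [add_zero] at this
    linarith
  have hXneg : ∀ f, X (-f) = -X f := by
    intro f
    have := hX f (-f)
    rw [add_neg_cancel, hX0] at this
    linarith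
  have htvneg : ∀ f, tv N (-f) = tv N f := by
    intro f
    refine sum_congr rfl fun p _ => ?_
    unfold jump
    split_ifs <;> simp only [Pi.neg_apply] <;> omega
  obtain ⟨n, hn⟩ : ∃ n, tv N f = n := ⟨_, rfl⟩
  induction n using Nat.strong_induction_on generalizing f with
  | _ n ih =>
  -- splitting `f` into two parts of smaller total variation
  have split : ∀ f g : ℤ × ℤ → ℤ, (∀ c, c ∉ box N → f c = 0) → (∀ c, c ∉ box N → g c = 0) →
      tv N f = n → tv N f = tv N g + tv N (f - g) → g ≠ 0 → f - g ≠ 0 → |X f| ≤ B * tv N f := by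
    intro f g hf hg hn hadd h1 h2
    have hfg : ∀ c, c ∉ box N → (f - g) c = 0 := fun c hc => by
      simp [hf c hc, hg c hc]
    have p1 := tv_pos hg h1
    have p2 := tv_pos hfg h2
    have i1 := ih (tv N g) (by omega) g hg rfl
    have i2 := ih (tv N (f - g)) (by omega) (f - g) hfg rfl
    have h3 := hX g (f - g)
    rw [add_sub_cancel] at h3
    have h4 := abs_add_le (X g) (X (f - g))
    rw [h3, hadd]
    push_cast
    linarith
  have pos : ∀ f : ℤ × ℤ → ℤ, (∀ c, c ∉ box N → f c = 0) → tv N f = n → (∃ c, 0 < f c) →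
      |X f| ≤ B * tv N f := by
    intro f hf hn ⟨c0, hc0⟩
    by_cases h01 : ∀ c, f c = 0 ∨ f c = 1
    · have hne : f ≠ 0 := fun h => by rw [h] at hc0; exact lt_irrefl _ hc0
      obtain ⟨ℓ, a, b, hℓ0, hℓ1, hℓ2, hl, hw, hj⟩ := exists_loop hf h01 hne
      by_cases hfw : f = wind ℓ a b
      · have := hloop ℓ a b hℓ0 hℓ2 hl (by rw [← hfw]; exact h01)
        rw [← hfw] at this
        refine this.trans (mul_le_mul_of_nonneg_left ?_ hB)
        exact_mod_cast hℓ1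
      · refine split f (wind ℓ a b) hf
          (fun c hc => wind_eq_zero hl.mem1 hl.mem2 (hl.const1 _ le_rfl) hc) hn
          (tv_add_of_jump fun p => ?_) hw (sub_ne_zero.2 hfw)
        rw [jump_sub]
        rcases hj p with h | h <;> rw [h] <;> simp
    · -- the part of `f` between the levels `0` and `1`
      set g : ℤ × ℤ → ℤ := fun c => max 0 (min 1 (f c)) with hg
      refine split f g hf (fun c hc => by simp [hg, hf c hc]) hn (tv_add_of_jump fun p => ?_)
        (fun h => ?_) (fun h => h01 fun c => ?_)
      · rw [jump_sub]
        simp only [jump, hg]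
        split_ifs <;> omega
      · have := congrFun h c0
        simp only [hg, Pi.zero_apply] at this
        omega
      · have := congrFun h c
        simp only [hg, Pi.zero_apply, Pi.sub_apply] at this
        omega
  by_cases h1 : ∃ c, 0 < f c
  · exact pos f hf hn h1
  · by_cases h2 : f = 0
    · rw [h2, hX0, abs_zero]
      positivity
    · have h3 : ∃ c, 0 < (-f) c := by
        obtain ⟨c, hc⟩ := Function.ne_iff.1 h2
        refine ⟨c, ?_⟩
        push Not at h1
        have := h1 c
        simp only [Pi.zero_apply, Pi.neg_apply] at *
        omega
      have := pos (-f) (fun c hc => by simp [hf c hc]) (by rw [htvneg]; exact hn) h3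
      rwa [hXneg, abs_neg, htvneg] at this

/-! ### Discrete isoperimetry -/

/-- The variation of a function on `ℤ` which is supported in `[0, N)`. -/
noncomputable def lineVar (N : ℕ) (u : ℤ → ℤ) : ℕ := ∑ y ∈ Icc (0 : ℤ) N, (u y - u (y - 1)).natAbs

/-- Every interior jump lies next to an element of `D`, each element of `D` serves at most two
jumps, and there are at most two jumps at the ends of the line. -/
lemma lineVar_le {N : ℕ} {u : ℤ → ℤ} (h01 : ∀ y, u y = 0 ∨ u y = 1) {D : Finset ℤ}
    (hD : ∀ y : ℤ, 1 ≤ y → y < N → u y ≠ u (y - 1) → y ∈ D ∨ y - 1 ∈ D) :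
    lineVar N u ≤ 2 * D.card + 2 := by
  classical
  have h : ∀ y ∈ Icc (0 : ℤ) N, (u y - u (y - 1)).natAbs ≤
      ((if y ∈ D then 1 else 0) + (if y ∈ D.image (· + 1) then 1 else 0)) +
        ((if y = 0 then 1 else 0) + if y = N then 1 else 0) := by
    intro y hy
    rw [mem_Icc] at hy
    by_cases h1 : u y = u (y - 1)
    · simp [h1]
    · have h2 : (u y - u (y - 1)).natAbs ≤ 1 := by
        rcases h01 y with h | h <;> rcases h01 (y - 1) with h' | h' <;> rw [h, h'] <;> simp
      have h3 : y - 1 ∈ D → y ∈ D.image (· + 1) := fun h => mem_image.2 ⟨_, h, by ring⟩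
      refine h2.trans ?_
      by_cases h4 : 1 ≤ y ∧ y < N
      · rcases hD y h4.1 h4.2 h1 with h | h
        · rw [if_pos h]; omega
        · rw [if_pos (h3 h)]; omega
      · have : y = 0 ∨ y = N := by omega
        rcases this with h | h
        · rw [if_pos h]; omega
        · rw [if_pos h]; omega
  unfold lineVar
  refine (sum_le_sum h).trans ?_
  rw [sum_add_distrib, sum_add_distrib, sum_add_distrib]
  have c1 : ∑ y ∈ Icc (0 : ℤ) N, (if y ∈ D then 1 else 0) ≤ D.card := by
    rw [← card_filter]
    exact card_le_card fun y hy => (mem_filter.1 hy).2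
  have c2 : ∑ y ∈ Icc (0 : ℤ) N, (if y ∈ D.image (· + 1) then 1 else 0) ≤ D.card := by
    rw [← card_filter]
    exact (card_le_card fun y hy => (mem_filter.1 hy).2).trans card_image_le
  have c3 : ∀ a : ℤ, ∑ y ∈ Icc (0 : ℤ) N, (if y = a then 1 else 0) ≤ 1 := by
    intro a
    rw [sum_ite_eq']
    split_ifs <;> simp
  have := c3 0
  have := c3 N
  omega

lemma line_trichotomy {N : ℕ} {u : ℤ → ℤ} (h01 : ∀ y, u y = 0 ∨ u y = 1) {D : Finset ℤ}
    (hD : ∀ y : ℤ, 1 ≤ y → y < N → u y ≠ u (y - 1) → y ∈ D ∨ y - 1 ∈ D) :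
    (∀ y : ℤ, 0 ≤ y → y < N → u y = 0) ∨ (∀ y : ℤ, 0 ≤ y → y < N → u y = 1) ∨ 1 ≤ D.card := by
  by_cases hc : 1 ≤ D.card
  · exact Or.inr (Or.inr hc)
  have hE : D = ∅ := by rw [← card_eq_zero]; omega
  have h : ∀ n : ℕ, (n : ℤ) < N → u n = u 0 := by
    intro n
    induction n with
    | zero => intro _; rfl
    | succ n ih =>
      intro hn
      push_cast at hn ⊢
      rw [← ih (by omega)]
      by_contra h
      have := hD (n + 1) (by omega) hn (by rwa [add_sub_cancel_right])
      simp [hE] at this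
  have h' : ∀ y : ℤ, 0 ≤ y → y < N → u y = u 0 := by
    intro y hy hyN
    lift y to ℕ using hy
    exact h y hyN
  rcases h01 0 with h0 | h0
  · exact Or.inl fun y a b => (h' y a b).trans h0
  · exact Or.inr (Or.inl fun y a b => (h' y a b).trans h0)

lemma lineVar_eq_zero {N : ℕ} {u : ℤ → ℤ} (h : ∀ y, u y = 0) : lineVar N u = 0 :=
  sum_eq_zero fun y _ => by simp [h]

lemma tv_eq (N : ℕ) (f : ℤ × ℤ → ℤ) : tv N f = ∑ x ∈ Icc (0 : ℤ) N, lineVar N (fun y => f (x, y))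
    + ∑ y ∈ Icc (0 : ℤ) N, lineVar N (fun x => f (x, y)) := by
  have h : ∀ x y : ℤ, ∑ β : Bool, (jump f (x, y, β)).natAbs
      = (f (x, y) - f (x, y - 1)).natAbs + (f (x, y) - f (x - 1, y)).natAbs := by
    intro x y
    rw [Fintype.sum_bool]
    simp only [jump, if_true, Bool.false_eq_true, if_false]
    omega
  unfold tv edges lineVar
  rw [sum_product]
  simp only [sum_product, h, sum_add_distrib]
  congr 1
  rw [sum_comm]

/-- Discrete isoperimetry: if `D` contains every cell of `f = 1` which has a neighbour in the
box with `f = 0`, then `f` or its complement in the box has perimeter at most `8 |D|`. -/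
lemma isoperimetry {N : ℕ} {f f' : ℤ × ℤ → ℤ} (hf : ∀ c, c ∉ box N → f c = 0)
    (hf' : ∀ c, c ∉ box N → f' c = 0) (h01 : ∀ c, f c = 0 ∨ f c = 1)
    (hff : ∀ c ∈ box N, f' c = 1 - f c) (D : Finset (ℤ × ℤ))
    (hD : ∀ c ∈ box N, ∀ c' ∈ box N, |c.1 - c'.1| + |c.2 - c'.2| ≤ 1 → f c = 1 → f c' = 0 →
      c ∈ D) :
    tv N f ≤ 8 * D.card ∨ tv N f' ≤ 8 * D.card := by
  classical
  have h01' : ∀ c, f' c = 0 ∨ f' c = 1 := by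
    intro c
    by_cases hc : c ∈ box N
    · rw [hff c hc]
      rcases h01 c with h | h <;> rw [h] <;> simp
    · exact Or.inl (hf' c hc)
  have hmem : ∀ x y : ℤ, 0 ≤ x → x < N → 0 ≤ y → y < N → (x, y) ∈ box N :=
    fun x y h1 h2 h3 h4 => mem_box.2 ⟨⟨h1, h2⟩, h3, h4⟩
  set Dc : ℤ → Finset ℤ := fun x => (D.filter (fun c => c.1 = x)).image Prod.snd with hDc
  set Dr : ℤ → Finset ℤ := fun y => (D.filter (fun c => c.2 = y)).image Prod.fst with hDr
  have memc : ∀ x y, (x, y) ∈ D → y ∈ Dc x := fun x y h =>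
    mem_image.2 ⟨_, mem_filter.2 ⟨h, rfl⟩, rfl⟩
  have memr : ∀ x y, (x, y) ∈ D → x ∈ Dr y := fun x y h =>
    mem_image.2 ⟨_, mem_filter.2 ⟨h, rfl⟩, rfl⟩
  have sumc : ∑ x ∈ Ico (0 : ℤ) N, (Dc x).card ≤ D.card := by
    refine (sum_le_sum fun x _ => card_image_le).trans ?_
    rw [← card_biUnion]
    · exact card_le_card (biUnion_subset.2 fun _ _ => filter_subset _ _)
    · intro x _ x' _ hne
      exact disjoint_filter.2 fun c _ h1 h2 => hne (h1.symm.trans h2)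
  have sumr : ∑ y ∈ Ico (0 : ℤ) N, (Dr y).card ≤ D.card := by
    refine (sum_le_sum fun x _ => card_image_le).trans ?_
    rw [← card_biUnion]
    · exact card_le_card (biUnion_subset.2 fun _ _ => filter_subset _ _)
    · intro x _ x' _ hne
      exact disjoint_filter.2 fun c _ h1 h2 => hne (h1.symm.trans h2)
  have hcol : ∀ x : ℤ, 0 ≤ x → x < N → ∀ y : ℤ, 1 ≤ y → y < N → f (x, y) ≠ f (x, y - 1) →
      y ∈ Dc x ∨ y - 1 ∈ Dc x := by
    intro x hx hxN y hy hyN hne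
    have m1 := hmem x y hx hxN (by omega) hyN
    have m2 := hmem x (y - 1) hx hxN (by omega) (by omega)
    rcases h01 (x, y) with h | h <;> rcases h01 (x, y - 1) with h' | h'
    · exact absurd (h.trans h'.symm) hne
    · exact Or.inr (memc _ _ (hD _ m2 _ m1 (by simp) h' h))
    · exact Or.inl (memc _ _ (hD _ m1 _ m2 (by simp) h h'))
    · exact absurd (h.trans h'.symm) hne
  have hrow : ∀ y : ℤ, 0 ≤ y → y < N → ∀ x : ℤ, 1 ≤ x → x < N → f (x, y) ≠ f (x - 1, y) →
      x ∈ Dr y ∨ x - 1 ∈ Dr y := by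
    intro y hy hyN x hx hxN hne
    have m1 := hmem x y (by omega) hxN hy hyN
    have m2 := hmem (x - 1) y (by omega) (by omega) hy hyN
    rcases h01 (x, y) with h | h <;> rcases h01 (x - 1, y) with h' | h'
    · exact absurd (h.trans h'.symm) hne
    · exact Or.inr (memr _ _ (hD _ m2 _ m1 (by simp) h' h))
    · exact Or.inl (memr _ _ (hD _ m1 _ m2 (by simp) h h'))
    · exact absurd (h.trans h'.symm) hne
  -- a function with the same interior jumps has small perimeter unless it has a full line
  have main : ∀ g : ℤ × ℤ → ℤ, (∀ c, c ∉ box N → g c = 0) → (∀ c, g c = 0 ∨ g c = 1) →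
      (∀ c ∈ box N, ∀ c' ∈ box N, g c ≠ g c' → f c ≠ f c') →
      tv N g ≤ 4 * D.card + 4 * N ∧ (tv N g ≤ 8 * D.card ∨
        (∃ x : ℤ, 0 ≤ x ∧ x < N ∧ ∀ y : ℤ, 0 ≤ y → y < N → g (x, y) = 1) ∨
        ∃ y : ℤ, 0 ≤ y ∧ y < N ∧ ∀ x : ℤ, 0 ≤ x → x < N → g (x, y) = 1) := by
    intro g hg g01 hgf
    have gcol : ∀ x : ℤ, 0 ≤ x → x < N → ∀ y : ℤ, 1 ≤ y → y < N → g (x, y) ≠ g (x, y - 1) →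
        y ∈ Dc x ∨ y - 1 ∈ Dc x := fun x hx hxN y hy hyN hne =>
      hcol x hx hxN y hy hyN (hgf _ (hmem x y hx hxN (by omega) hyN) _
        (hmem x (y - 1) hx hxN (by omega) (by omega)) hne)
    have grow : ∀ y : ℤ, 0 ≤ y → y < N → ∀ x : ℤ, 1 ≤ x → x < N → g (x, y) ≠ g (x - 1, y) →
        x ∈ Dr y ∨ x - 1 ∈ Dr y := fun y hy hyN x hx hxN hne =>
      hrow y hy hyN x hx hxN (hgf _ (hmem x y (by omega) hxN hy hyN) _
        (hmem (x - 1) y (by omega) (by omega) hy hyN) hne)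
    have ins : ∀ F : ℤ → ℕ, F N = 0 → ∑ x ∈ Icc (0 : ℤ) N, F x = ∑ x ∈ Ico (0 : ℤ) N, F x := by
      intro F hF
      rw [← Ico_insert_right (by positivity), sum_insert (by simp), hF, zero_add]
    have tveq : tv N g = ∑ x ∈ Ico (0 : ℤ) N, lineVar N (fun y => g (x, y))
        + ∑ y ∈ Ico (0 : ℤ) N, lineVar N (fun x => g (x, y)) := by
      rw [tv_eq, ins, ins]
      · exact lineVar_eq_zero fun x => hg _ (by rw [mem_box]; simp)
      · exact lineVar_eq_zero fun x => hg _ (by rw [mem_box]; simp)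
    constructor
    · have e1 : ∑ x ∈ Ico (0 : ℤ) N, lineVar N (fun y => g (x, y))
          ≤ ∑ x ∈ Ico (0 : ℤ) N, (2 * (Dc x).card + 2) := by
        refine sum_le_sum fun x hx => ?_
        rw [mem_Ico] at hx
        exact lineVar_le (fun y => g01 _) (gcol x hx.1 hx.2)
      have e2 : ∑ y ∈ Ico (0 : ℤ) N, lineVar N (fun x => g (x, y))
          ≤ ∑ y ∈ Ico (0 : ℤ) N, (2 * (Dr y).card + 2) := by
        refine sum_le_sum fun y hy => ?_
        rw [mem_Ico] at hy
        exact lineVar_le (fun y => g01 _) (grow y hy.1 hy.2)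
      rw [sum_add_distrib, ← mul_sum, sum_const, Int.card_Ico, smul_eq_mul] at e1 e2
      rw [tveq]
      have : ((N : ℤ) - 0).toNat = N := by omega
      rw [this] at e1 e2
      omega
    · by_contra hcon
      push Not at hcon
      obtain ⟨hbig, hc, hr⟩ := hcon
      have e1 : ∑ x ∈ Ico (0 : ℤ) N, lineVar N (fun y => g (x, y))
          ≤ ∑ x ∈ Ico (0 : ℤ) N, 4 * (Dc x).card := by
        refine sum_le_sum fun x hx => ?_
        rw [mem_Ico] at hx
        rcases line_trichotomy (fun y => g01 (x, y)) (gcol x hx.1 hx.2) with h | h | h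
        · rw [lineVar_eq_zero]
          · exact Nat.zero_le _
          · intro y
            by_cases hy : 0 ≤ y ∧ y < N
            · exact h y hy.1 hy.2
            · exact hg _ (by rw [mem_box]; dsimp only; omega)
        · obtain ⟨y, h1, h2, h3⟩ := hc x hx.1 hx.2
          exact absurd (h y h1 h2) h3
        · have := lineVar_le (fun y => g01 (x, y)) (gcol x hx.1 hx.2)
          omega
      have e2 : ∑ y ∈ Ico (0 : ℤ) N, lineVar N (fun x => g (x, y))
          ≤ ∑ y ∈ Ico (0 : ℤ) N, 4 * (Dr y).card := by
        refine sum_le_sum fun y hy => ?_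
        rw [mem_Ico] at hy
        rcases line_trichotomy (fun x => g01 (x, y)) (grow y hy.1 hy.2) with h | h | h
        · rw [lineVar_eq_zero]
          · exact Nat.zero_le _
          · intro x
            by_cases hx : 0 ≤ x ∧ x < N
            · exact h x hx.1 hx.2
            · exact hg _ (by rw [mem_box]; dsimp only; omega)
        · obtain ⟨x, h1, h2, h3⟩ := hr y hy.1 hy.2
          exact absurd (h x h1 h2) h3
        · have := lineVar_le (fun x => g01 (x, y)) (grow y hy.1 hy.2)
          omega
      rw [← mul_sum] at e1 e2
      rw [tveq] at hbig
      omega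
  obtain ⟨b1, c1⟩ := main f hf h01 (fun _ _ _ _ h => h)
  obtain ⟨-, c2⟩ := main f' hf' h01' (fun c hc c' hc' h h' => h (by
    rw [hff c hc, hff c' hc', h']))
  have conflict : ∀ x y : ℤ, 0 ≤ x → x < N → 0 ≤ y → y < N → f (x, y) = 1 → f' (x, y) = 1 →
      False := by
    intro x y h1 h2 h3 h4 h5 h6
    rw [hff _ (hmem x y h1 h2 h3 h4), h5] at h6
    simp at h6
  have f0 : ∀ x y : ℤ, 0 ≤ x → x < N → 0 ≤ y → y < N → f' (x, y) = 1 → f (x, y) = 0 := by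
    intro x y h1 h2 h3 h4 h5
    rw [hff _ (hmem x y h1 h2 h3 h4)] at h5
    omega
  rcases c1 with c1 | c1
  · exact Or.inl c1
  rcases c2 with c2 | c2
  · exact Or.inr c2
  left
  -- now there is a full line and an empty line, so that all transversal lines meet `D`
  have hN : N ≤ D.card := by
    rcases c1 with ⟨x, hx, hxN, h⟩ | ⟨y, hy, hyN, h⟩ <;>
      rcases c2 with ⟨x', hx', hxN', h'⟩ | ⟨y', hy', hyN', h'⟩
    · refine le_trans ?_ sumr
      have : ∀ y ∈ Ico (0 : ℤ) N, 1 ≤ (Dr y).card := by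
        intro y hy
        rw [mem_Ico] at hy
        rcases line_trichotomy (fun x => h01 (x, y)) (hrow y hy.1 hy.2) with h2 | h2 | h2
        · have := h2 x hx hxN
          rw [h y hy.1 hy.2] at this
          simp at this
        · have := h2 x' hx' hxN'
          rw [f0 x' y hx' hxN' hy.1 hy.2 (h' y hy.1 hy.2)] at this
          simp at this
        · exact h2
      simpa using sum_le_sum this
    · exact (conflict x y' hx hxN hy' hyN' (h y' hy' hyN') (h' x hx hxN)).elim
    · exact (conflict x' y hx' hxN' hy hyN (h x' hx' hxN') (h' y hy hyN)).elim
    · refine le_trans ?_ sumc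
      have : ∀ x ∈ Ico (0 : ℤ) N, 1 ≤ (Dc x).card := by
        intro x hx
        rw [mem_Ico] at hx
        rcases line_trichotomy (fun y => h01 (x, y)) (hcol x hx.1 hx.2) with h2 | h2 | h2
        · have := h2 y hy hyN
          rw [h x hx.1 hx.2] at this
          simp at this
        · have := h2 y' hy' hyN'
          rw [f0 x y' hx.1 hx.2 hy' hyN' (h' x hx.1 hx.2)] at this
          simp at this
        · exact h2
      simpa using sum_le_sum this
  omega

/-! ### Counting points in thickened regions -/

/-- The discrepancy of a function `f` on cells: its sum over the cells `cl i` of the sample minus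
`q` times its sum over the box, where `q` is the expected number of sample points in a cell. -/
noncomputable def disc {n : ℕ} (N : ℕ) (q : ℝ) (cl : Fin n → ℤ × ℤ) (f : ℤ × ℤ → ℤ) : ℝ :=
  ∑ i, ((f (cl i) : ℤ) : ℝ) - q * ∑ c ∈ box N, ((f c : ℤ) : ℝ)

lemma disc_add {n : ℕ} (N : ℕ) (q : ℝ) (cl : Fin n → ℤ × ℤ) (f g : ℤ × ℤ → ℤ) :
    disc N q cl (f + g) = disc N q cl f + disc N q cl g := by
  simp only [disc, Pi.add_apply, Int.cast_add, sum_add_distrib]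
  ring

/-- Loops of arbitrary length are handled by rounding the length up to a power of two, at the cost
of a factor `2`. -/
lemma abs_disc_le {n N r : ℕ} {q s : ℝ} (hs : 0 ≤ s) {cl : Fin n → ℤ × ℤ}
    (hN : 2 * (N + 1) ^ 2 ≤ 2 ^ (5 * 16 ^ r))
    (hgood : ∀ k ≤ 5 * 16 ^ r, ∀ v, IsWalk N k v →
      |disc N q cl (wind (2 ^ k) v.1 v.2)| ≤ 264 * s * 8 ^ r * 2 ^ k)
    {f : ℤ × ℤ → ℤ} (hf : ∀ c, c ∉ box N → f c = 0) :
    |disc N q cl f| ≤ 528 * s * 8 ^ r * tv N f := by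
  refine le_tv_of_loops (by positivity) (disc N q cl) (disc_add N q cl) ?_ f hf
  intro ℓ a b hℓ hℓN hab h01
  obtain ⟨k, hk, hk', hk2⟩ : ∃ k, ℓ ≤ 2 ^ k ∧ k ≤ 5 * 16 ^ r ∧ 2 ^ k ≤ 2 * ℓ := by
    refine ⟨Nat.clog 2 ℓ, Nat.le_pow_clog (by norm_num) ℓ,
      (Nat.clog_le_iff_le_pow (by norm_num)).2 (hℓN.trans hN), ?_⟩
    rcases Nat.lt_or_ge 1 ℓ with h | h
    · have h1 := Nat.pow_pred_clog_lt_self (b := 2) (by norm_num) h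
      have h2 : 0 < Nat.clog 2 ℓ := Nat.clog_pos (by norm_num) h
      obtain ⟨j, hj⟩ := Nat.exists_eq_succ_of_ne_zero h2.ne'
      rw [hj] at h1 ⊢
      simp only [Nat.pred_succ, Nat.succ_eq_add_one, pow_succ] at h1 ⊢
      omega
    · have : ℓ = 1 := by omega
      subst this
      simp
  have hw : wind (2 ^ k) a b = wind ℓ a b := wind_extend hk hab.const1
  have hW : IsWalk N k (a, b) :=
    ⟨hab.mem1, hab.mem2, hab.step1, hab.step2, fun t ht => hab.const1 t (hk.trans ht),
      fun t ht => hab.const2 t (hk.trans ht), by dsimp only; rw [hw]; exact h01⟩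
  have h := hgood k hk' _ hW
  dsimp only at h
  rw [hw] at h
  refine h.trans ?_
  have h2 : (2 : ℝ) ^ k ≤ 2 * ℓ := by exact_mod_cast hk2
  calc 264 * s * 8 ^ r * 2 ^ k ≤ 264 * s * 8 ^ r * (2 * ℓ) := by gcongr
    _ = _ := by ring

/-- A set of cells together with its edge-neighbours in the box. -/
noncomputable def thicken (N : ℕ) (R : Finset (ℤ × ℤ)) : Finset (ℤ × ℤ) :=
  open Classical in (box N).filter fun c => ∃ c' ∈ R, |c.1 - c'.1| + |c.2 - c'.2| ≤ 1

/-- On the event of small discrepancy, the thickening of `R` contains at least as many points as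
`R` should: the surplus of cells in `thicken N R \ R` controls the perimeter, hence the
discrepancy, of the thickening. -/
lemma le_card_thicken {n N r : ℕ} {q s : ℝ} (hs : 4224 * 8 ^ r ≤ s) (hq : s ^ 2 ≤ q)
    (hqN : q * N ^ 2 = n) {cl : Fin n → ℤ × ℤ} (hcl : ∀ i, cl i ∈ box N)
    (hN : 2 * (N + 1) ^ 2 ≤ 2 ^ (5 * 16 ^ r))
    (hgood : ∀ k ≤ 5 * 16 ^ r, ∀ v, IsWalk N k v →
      |disc N q cl (wind (2 ^ k) v.1 v.2)| ≤ 264 * s * 8 ^ r * 2 ^ k)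
    {R : Finset (ℤ × ℤ)} (hR : R ⊆ box N) :
    q * R.card ≤ (univ.filter fun i => cl i ∈ thicken N R).card := by
  classical
  have hs0 : 0 ≤ s := le_trans (by positivity) hs
  set R' := thicken N R with hR'
  have hRR' : R ⊆ R' := by
    intro c hc
    rw [hR', thicken, mem_filter]
    exact ⟨hR hc, c, hc, by simp⟩
  have hR'N : R' ⊆ box N := by
    rw [hR', thicken]
    exact filter_subset _ _
  set D := R' \ R with hD
  set f : ℤ × ℤ → ℤ := fun c => if c ∈ R' then 1 else 0 with hf
  set f' : ℤ × ℤ → ℤ := fun c => if c ∈ box N \ R' then 1 else 0 with hf'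
  have hf0 : ∀ c, c ∉ box N → f c = 0 := fun c hc => if_neg fun h => hc (hR'N h)
  have hf'0 : ∀ c, c ∉ box N → f' c = 0 := fun c hc => if_neg fun h => hc (sdiff_subset h)
  have hcard : ((box N).card : ℝ) = (N : ℝ) ^ 2 := by
    simp [box, sq]
  -- the two indicators have opposite discrepancies, since the total discrepancy vanishes
  have hsum : disc N q cl f + disc N q cl f' = 0 := by
    rw [← disc_add]
    have h1 : ∀ c ∈ box N, (((f + f') c : ℤ) : ℝ) = 1 := by
      intro c hc
      by_cases h : c ∈ R' <;> simp [hf, hf', h, hc]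
    rw [disc, sum_congr rfl h1, sum_congr rfl fun i _ => h1 _ (hcl i)]
    simp only [sum_const, nsmul_eq_mul, mul_one, hcard, hqN, card_univ, Fintype.card_fin, sub_self]
  have hDmem : ∀ c ∈ box N, ∀ c' ∈ box N, |c.1 - c'.1| + |c.2 - c'.2| ≤ 1 → f c = 1 → f c' = 0 →
      c ∈ D := by
    intro c hc c' hc' hcc h1 h0
    have h1' : c ∈ R' := by
      by_contra h
      simp [hf, h] at h1
    have h0' : c' ∉ R' := by
      intro h
      simp [hf, h] at h0
    rw [hD, mem_sdiff]
    refine ⟨h1', fun hcR => h0' ?_⟩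
    rw [hR', thicken, mem_filter]
    refine ⟨hc', c, hcR, ?_⟩
    rwa [abs_sub_comm, abs_sub_comm c'.2]
  have hX : |disc N q cl f| ≤ 528 * s * 8 ^ r * (8 * D.card) := by
    have key : ∀ t : ℕ, t ≤ 8 * D.card →
        528 * s * 8 ^ r * (t : ℝ) ≤ 528 * s * 8 ^ r * (8 * D.card) := by
      intro t ht
      have : (t : ℝ) ≤ 8 * D.card := by exact_mod_cast ht
      gcongr
    rcases isoperimetry (N := N) (f := f) (f' := f') hf0 hf'0
      (fun c => by by_cases h : c ∈ R' <;> simp [hf, h])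
      (fun c hc => by by_cases h : c ∈ R' <;> simp [hf, hf', h, hc]) D hDmem with h | h
    · exact (abs_disc_le hs0 hN hgood hf0).trans (key _ h)
    · have e : disc N q cl f = - disc N q cl f' := by linarith
      rw [e, abs_neg]
      exact (abs_disc_le hs0 hN hgood hf'0).trans (key _ h)
  have hXD : |disc N q cl f| ≤ q * D.card := by
    refine hX.trans ?_
    calc 528 * s * 8 ^ r * (8 * (D.card : ℝ)) = s * (4224 * 8 ^ r) * D.card := by ring
      _ ≤ s * s * D.card := by gcongr
      _ = s ^ 2 * D.card := by ring
      _ ≤ q * D.card := by gcongr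
  have hval : disc N q cl f = (univ.filter fun i => cl i ∈ R').card - q * R'.card := by
    have e2 : (box N).filter (fun c => c ∈ R') = R' := by
      ext c
      simp only [mem_filter, and_iff_right_iff_imp]
      exact fun h => hR'N h
    rw [disc]
    congr 1
    · simp [hf]
    · congr 1
      have : ∀ c, ((f c : ℤ) : ℝ) = if c ∈ R' then (1 : ℝ) else 0 := by
        intro c
        simp only [hf]
        split_ifs <;> simp
      simp only [this]
      rw [← sum_filter, e2]
      simp
  have hcardD : (R'.card : ℝ) = R.card + D.card := by
    have := card_sdiff_add_card_eq_card hRR'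
    rw [← this]
    push_cast
    ring
  have h := (abs_le.1 hXD).1
  rw [hval, hcardD] at h
  linarith

/-! ### Geometry of the cells and the marriage theorem -/

/-- The truncation of `x` to `[0, 1]`. -/
noncomputable def trunc (x : ℝ) : ℝ := max 0 (min 1 x)

lemma trunc_mono : Monotone trunc := fun _ _ h => max_le_max le_rfl (min_le_min le_rfl h)

lemma trunc_of_nonpos {x : ℝ} (h : x ≤ 0) : trunc x = 0 :=
  max_eq_left ((min_le_right _ _).trans h)

lemma trunc_of_one_le {x : ℝ} (h : 1 ≤ x) : trunc x = 1 := by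
  rw [trunc, min_eq_left h]
  simp

lemma sum_trunc {x : ℝ} (hx : 0 ≤ x) (k : ℕ) : ∑ i ∈ range k, trunc (x - i) = min x k := by
  induction k with
  | zero => simp [hx]
  | succ k ih =>
    rw [sum_range_succ, ih, trunc]
    push_cast
    rcases le_total x k with h | h
    · rw [min_eq_left h, min_eq_left (by linarith : x ≤ (k : ℝ) + 1),
        min_eq_right (by linarith : x - k ≤ 1), max_eq_left (by linarith)]
      ring
    · rw [min_eq_right h, max_eq_right (le_min zero_le_one (by linarith))]
      rcases le_total x (k + 1) with h' | h'
      · rw [min_eq_left h', min_eq_right (by linarith : x - k ≤ 1)]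
        ring
      · rw [min_eq_right h', min_eq_left (by linarith : 1 ≤ x - k)]

/-- The length of the intersection of the unit interval `[i, i + 1]` with the `a`-th interval of
length `σ`. -/
noncomputable def ov (σ : ℝ) (i : ℕ) (a : ℤ) : ℝ := trunc ((a + 1) * σ - i) - trunc (a * σ - i)

lemma ov_nonneg {σ : ℝ} (hσ : 0 < σ) (i : ℕ) (a : ℤ) : 0 ≤ ov σ i a := by
  have : trunc (a * σ - i) ≤ trunc ((a + 1) * σ - i) := trunc_mono (by nlinarith)
  unfold ov
  linarith

lemma of_ov_pos {σ : ℝ} {i : ℕ} {a : ℤ} (h : 0 < ov σ i a) :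
    (i : ℝ) < (a + 1) * σ ∧ a * σ < i + 1 := by
  have hm : ∀ x, 0 ≤ trunc x := fun x => le_max_left _ _
  have hm' : ∀ x, trunc x ≤ 1 := fun x => max_le zero_le_one (min_le_left _ _)
  constructor <;> by_contra! hc <;> unfold ov at h
  · have := hm (a * σ - i)
    rw [trunc_of_nonpos (sub_nonpos.2 hc)] at h
    linarith
  · have := hm' ((a + 1) * σ - i)
    rw [trunc_of_one_le (by linarith : 1 ≤ a * σ - i)] at h
    linarith

lemma sum_Ico_int_sub (g : ℤ → ℝ) (N : ℕ) :
    ∑ a ∈ Ico (0 : ℤ) N, (g (a + 1) - g a) = g N - g 0 := by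
  induction N with
  | zero => simp
  | succ N ih =>
    have : Ico (0 : ℤ) ((N + 1 : ℕ) : ℤ) = insert (N : ℤ) (Ico (0 : ℤ) N) := by
      ext x
      simp only [mem_Ico, mem_insert]
      omega
    rw [this, sum_insert (by simp), ih]
    push_cast
    ring

lemma sum_ov_cell {σ : ℝ} {N m : ℕ} (hσm : N * σ = m) {i : ℕ} (hi : i < m) :
    ∑ a ∈ Ico (0 : ℤ) N, ov σ i a = 1 := by
  have h := sum_Ico_int_sub (fun a => trunc (a * σ - i)) N
  have hi' : (i : ℝ) + 1 ≤ m := by exact_mod_cast hi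
  simp only [Int.cast_add, Int.cast_one, Int.cast_natCast, Int.cast_zero, hσm] at h
  unfold ov
  rw [h, trunc_of_one_le (by linarith), trunc_of_nonpos (by simp)]
  simp

lemma sum_ov_grid {σ : ℝ} (hσ : 0 < σ) {N m : ℕ} (hσm : N * σ = m) {a : ℤ} (ha : a ∈ Ico (0 : ℤ) N) :
    ∑ i : Fin m, ov σ i a = σ := by
  rw [mem_Ico] at ha
  have h0 : (0 : ℝ) ≤ a := by exact_mod_cast ha.1
  have h1 : (a : ℝ) + 1 ≤ N := by exact_mod_cast ha.2
  have h2 : (a + 1) * σ ≤ m := by rw [← hσm]; gcongr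
  rw [Fin.sum_univ_eq_sum_range (fun i => ov σ i a)]
  unfold ov
  rw [sum_sub_distrib, sum_trunc (by positivity), sum_trunc (by positivity), min_eq_left h2,
    min_eq_left (by nlinarith)]
  ring

/-- Unit cells in `A` fit, by area, in the cells of side `σ` which they meet. -/
lemma card_le_area {σ : ℝ} (hσ : 0 < σ) {N m : ℕ} (hσm : N * σ = m) (A : Finset (Fin m × Fin m))
    {R : Finset (ℤ × ℤ)} (hRN : R ⊆ box N)
    (hR : ∀ g ∈ A, ∀ c ∈ box N, 0 < ov σ g.1 c.1 → 0 < ov σ g.2 c.2 → c ∈ R) :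
    (A.card : ℝ) ≤ σ ^ 2 * R.card := by
  have hnn : ∀ (g : Fin m × Fin m) (c : ℤ × ℤ), 0 ≤ ov σ g.1 c.1 * ov σ g.2 c.2 := fun g c =>
    mul_nonneg (ov_nonneg hσ _ _) (ov_nonneg hσ _ _)
  have hbox : ∀ g : Fin m × Fin m, ∑ c ∈ box N, ov σ g.1 c.1 * ov σ g.2 c.2 = 1 := by
    intro g
    rw [box, sum_product]
    simp only
    rw [← sum_mul_sum, sum_ov_cell hσm g.1.2, sum_ov_cell hσm g.2.2, one_mul]
  have hgrid : ∀ c ∈ box N, ∑ g : Fin m × Fin m, ov σ g.1 c.1 * ov σ g.2 c.2 = σ ^ 2 := by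
    intro c hc
    rw [box, mem_product] at hc
    rw [Fintype.sum_prod_type]
    simp only
    rw [← sum_mul_sum, sum_ov_grid hσ hσm hc.1, sum_ov_grid hσ hσm hc.2, sq]
  have h1 : ∀ g ∈ A, (1 : ℝ) = ∑ c ∈ R, ov σ g.1 c.1 * ov σ g.2 c.2 := by
    intro g hg
    rw [sum_subset hRN, hbox]
    intro c hc hcR
    by_contra h
    have h' := lt_of_le_of_ne (hnn g c) (Ne.symm h)
    have h1 := ov_nonneg hσ g.1 c.1
    have h2 := ov_nonneg hσ g.2 c.2
    exact hcR (hR g hg c hc (pos_of_mul_pos_left h' h2) (pos_of_mul_pos_right h' h1))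
  have h2 : (A.card : ℝ) ≤ ∑ g : Fin m × Fin m, ∑ c ∈ R, ov σ g.1 c.1 * ov σ g.2 c.2 := by
    have e : (A.card : ℝ) = ∑ g ∈ A, ∑ c ∈ R, ov σ g.1 c.1 * ov σ g.2 c.2 := by
      rw [← sum_congr rfl h1, sum_const, nsmul_eq_mul, mul_one]
    rw [e]
    exact sum_le_sum_of_subset_of_nonneg (subset_univ _) fun g _ _ => sum_nonneg fun c _ => hnn g c
  rw [sum_comm, sum_congr rfl fun c hc => hgrid c (hRN hc), sum_const, nsmul_eq_mul, mul_comm] at h2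
  exact h2

/-- Index of the interval of length `σ` containing `x`; the endpoint `N σ` is put into the last
interval. -/
noncomputable def idx (N : ℕ) (σ x : ℝ) : ℤ := min ⌊x / σ⌋ ((N : ℤ) - 1)

lemma idx_spec {N : ℕ} {σ x : ℝ} (hN : 0 < N) (hσ : 0 < σ) (hx : 0 ≤ x) (hx' : x ≤ N * σ) :
    (0 ≤ idx N σ x ∧ idx N σ x < N) ∧ idx N σ x * σ ≤ x ∧ x ≤ (idx N σ x + 1) * σ := by
  have h1 : (⌊x / σ⌋ : ℝ) * σ ≤ x := by
    rw [← le_div_iff₀ hσ]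
    exact Int.floor_le _
  have h2 : x ≤ (⌊x / σ⌋ + 1) * σ := by
    rw [← div_le_iff₀ hσ]
    exact (Int.lt_floor_add_one _).le
  have h3 : 0 ≤ ⌊x / σ⌋ := Int.floor_nonneg.2 (by positivity)
  unfold idx
  rcases le_total ⌊x / σ⌋ ((N : ℤ) - 1) with h | h
  · rw [min_eq_left h]
    exact ⟨⟨h3, by omega⟩, h1, h2⟩
  · rw [min_eq_right h]
    refine ⟨⟨by omega, by omega⟩, le_trans ?_ h1, by push_cast; linarith⟩
    have : (((N : ℤ) - 1 : ℤ) : ℝ) ≤ (⌊x / σ⌋ : ℝ) := by exact_mod_cast h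
    gcongr

/-- The marriage theorem turns the lower bounds on the number of points in thickenings into a
matching of bounded length. -/
lemma exists_matching {σ : ℝ} (hσ : 0 < σ) {N m : ℕ} (hσm : N * σ = m)
    (ω : Fin (m ^ 2) → ℝ × ℝ) (cl : Fin (m ^ 2) → ℤ × ℤ)
    (hcl : ∀ i, ((cl i).1 * σ ≤ (ω i).1 ∧ (ω i).1 ≤ ((cl i).1 + 1) * σ) ∧
      (cl i).2 * σ ≤ (ω i).2 ∧ (ω i).2 ≤ ((cl i).2 + 1) * σ)
    (hcount : ∀ R ⊆ box N, σ ^ 2 * R.card ≤ (univ.filter fun i => cl i ∈ thicken N R).card) :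
    ∃ φ : Fin (m ^ 2) ≃ Fin m × Fin m, ∀ i,
      Real.sqrt (((ω i).1 - ((((φ i).1 : ℕ) : ℝ) + 1 / 2)) ^ 2 +
        ((ω i).2 - ((((φ i).2 : ℕ) : ℝ) + 1 / 2)) ^ 2) ≤ 4 * σ + 1 := by
  classical
  set t : Fin m × Fin m → Finset (Fin (m ^ 2)) := fun g => univ.filter fun i =>
    |(ω i).1 - (((g.1 : ℕ) : ℝ) + 1 / 2)| ≤ 2 * σ + 1 / 2 ∧
      |(ω i).2 - (((g.2 : ℕ) : ℝ) + 1 / 2)| ≤ 2 * σ + 1 / 2 with ht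
  -- the one-dimensional distance estimate
  have key : ∀ (x : ℝ) (i : ℕ) (a a' : ℤ), |a' - a| ≤ 1 → 0 < ov σ i a → a' * σ ≤ x →
      x ≤ (a' + 1) * σ → |x - ((i : ℝ) + 1 / 2)| ≤ 2 * σ + 1 / 2 := by
    intro x i a a' haa hov h1 h2
    obtain ⟨h3, h4⟩ := of_ov_pos hov
    obtain ⟨h5, h6⟩ := abs_le.1 haa
    have h5' : (-1 : ℝ) ≤ a' - a := by exact_mod_cast h5
    have h6' : (a' : ℝ) - a ≤ 1 := by exact_mod_cast h6
    rw [abs_le]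
    constructor <;> nlinarith
  have hall : ∀ A : Finset (Fin m × Fin m), A.card ≤ (A.biUnion t).card := by
    intro A
    set R := (box N).filter fun c => ∃ g ∈ A, 0 < ov σ g.1 c.1 ∧ 0 < ov σ g.2 c.2 with hR
    have h1 := card_le_area hσ hσm A (R := R) (filter_subset _ _) (fun g hg c hc h1 h2 => by
      rw [hR, mem_filter]
      exact ⟨hc, g, hg, h1, h2⟩)
    have h2 := hcount R (filter_subset _ _)
    have h3 : (univ.filter fun i => cl i ∈ thicken N R) ⊆ A.biUnion t := by
      intro i hi
      simp only [thicken, mem_filter, mem_univ, true_and] at hi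
      obtain ⟨_, c, hc, hcc⟩ := hi
      rw [hR, mem_filter] at hc
      obtain ⟨_, g, hg, ho1, ho2⟩ := hc
      have ha := abs_nonneg ((cl i).1 - c.1)
      have hb := abs_nonneg ((cl i).2 - c.2)
      simp only [mem_biUnion, ht, mem_filter, mem_univ, true_and]
      exact ⟨g, hg, key _ _ c.1 (cl i).1 (by omega) ho1 (hcl i).1.1 (hcl i).1.2,
        key _ _ c.2 (cl i).2 (by omega) ho2 (hcl i).2.1 (hcl i).2.2⟩
    have h4 : ((univ.filter fun i => cl i ∈ thicken N R).card : ℝ) ≤ (A.biUnion t).card := by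
      exact_mod_cast card_le_card h3
    exact_mod_cast h1.trans (h2.trans h4)
  obtain ⟨f, hf, hft⟩ := (all_card_le_biUnion_card_iff_exists_injective t).1 hall
  have hbij : Function.Bijective f :=
    (Fintype.bijective_iff_injective_and_card f).2 ⟨hf, by simp [sq]⟩
  refine ⟨(Equiv.ofBijective f hbij).symm, fun i => ?_⟩
  have h := hft ((Equiv.ofBijective f hbij).symm i)
  have e : f ((Equiv.ofBijective f hbij).symm i) = i := Equiv.ofBijective_apply_symm_apply f hbij i
  rw [e] at h
  simp only [ht, mem_filter, mem_univ, true_and] at h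
  refine Real.sqrt_le_iff.2 ⟨by positivity, ?_⟩
  have h1 := sq_le_sq' (abs_le.1 h.1).1 (abs_le.1 h.1).2
  have h2 := sq_le_sq' (abs_le.1 h.2).1 (abs_le.1 h.2).2
  nlinarith [sq_nonneg (2 * σ + 1 / 2)]

/-! ### The uniform distribution and the probability of a matching -/

/-- The square `[0, m]²`. -/
def sqr (m : ℕ) : Set (ℝ × ℝ) := Set.Icc (0 : ℝ) m ×ˢ Set.Icc (0 : ℝ) m

/-- The uniform distribution on the square `[0, m]²`. -/
noncomputable def unif (m : ℕ) : Measure (ℝ × ℝ) :=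
  (volume (sqr m))⁻¹ • volume.restrict (sqr m)

lemma measurableSet_sqr (m : ℕ) : MeasurableSet (sqr m) := measurableSet_Icc.prod measurableSet_Icc

lemma volume_rect (a b c d : ℝ) : volume (Set.Icc a b ×ˢ Set.Icc c d) =
    ENNReal.ofReal (b - a) * ENNReal.ofReal (d - c) := by
  rw [Measure.volume_eq_prod, Measure.prod_prod, Real.volume_Icc, Real.volume_Icc]

lemma volume_sqr (m : ℕ) : volume (sqr m) = ENNReal.ofReal ((m : ℝ) ^ 2) := by
  rw [sqr, volume_rect, ← ENNReal.ofReal_mul (by simp), sub_zero, sq]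

lemma isProbabilityMeasure_unif {m : ℕ} (hm : 0 < m) : IsProbabilityMeasure (unif m) := by
  constructor
  rw [unif, Measure.smul_apply, Measure.restrict_apply MeasurableSet.univ, Set.univ_inter,
    smul_eq_mul, ENNReal.inv_mul_cancel]
  · rw [volume_sqr]
    simpa using hm.ne'
  · rw [volume_sqr]
    simp

lemma unif_real_rect_le {m : ℕ} (hm : 0 < m) {a b c d t : ℝ} (hab : b - a = t) (hcd : d - c = t)
    (ht : 0 ≤ t) : (unif m).real (Set.Icc a b ×ˢ Set.Icc c d) ≤ t ^ 2 / (m : ℝ) ^ 2 := by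
  have h2 : (0 : ℝ) < (m : ℝ) ^ 2 := by positivity
  refine ENNReal.toReal_le_of_le_ofReal (by positivity) ?_
  rw [unif, Measure.smul_apply, smul_eq_mul, volume_sqr, ← ENNReal.ofReal_inv_of_pos h2]
  calc ENNReal.ofReal (((m : ℝ) ^ 2)⁻¹) * (volume.restrict (sqr m)) (Set.Icc a b ×ˢ Set.Icc c d)
      ≤ ENNReal.ofReal (((m : ℝ) ^ 2)⁻¹) * volume (Set.Icc a b ×ˢ Set.Icc c d) := by
        gcongr
        exact Measure.restrict_le_self
    _ = ENNReal.ofReal (t ^ 2 / (m : ℝ) ^ 2) := by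
        rw [volume_rect, hab, hcd, ← ENNReal.ofReal_mul ht, ← ENNReal.ofReal_mul (by positivity)]
        congr 1
        field_simp

lemma ae_mem_sqr {m : ℕ} (hm : 0 < m) (n : ℕ) :
    ∀ᵐ ω ∂(Measure.pi fun _ : Fin n => unif m), ∀ i, ω i ∈ sqr m := by
  have := isProbabilityMeasure_unif hm
  rw [ae_all_iff]
  intro i
  have h : ∀ᵐ x ∂(unif m), x ∈ sqr m := by
    unfold unif
    exact Measure.ae_smul_measure (ae_restrict_mem (measurableSet_sqr m)) _
  exact (measurePreserving_eval (fun _ : Fin n => unif m) i).quasiMeasurePreserving.ae h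

/-- The samples admitting a matching with the grid points of length at most `B`. -/
def matchable (m : ℕ) (B : ℝ) : Set (Fin (m ^ 2) → ℝ × ℝ) :=
  {ω | ∃ φ : Fin (m ^ 2) ≃ Fin m × Fin m,
    ∀ i, Real.sqrt (((ω i).1 - ((((φ i).1 : ℕ) : ℝ) + 1 / 2)) ^ 2 +
      ((ω i).2 - ((((φ i).2 : ℕ) : ℝ) + 1 / 2)) ^ 2) ≤ B}

/-- The probability estimate for cells of side between `s = 4224 * 8 ^ r` and `2 * s`. -/
lemma prob_matchable {m N r : ℕ} {σ B : ℝ} (hm : 0 < m) (hN : 0 < N) (hσm : N * σ = m)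
    (hσ1 : 4224 * 8 ^ r ≤ σ) (hσ2 : σ ≤ 2 * (4224 * 8 ^ r)) (hB : 4 * σ + 1 ≤ B)
    (hN2 : 2 * (N + 1) ^ 2 ≤ 2 ^ (5 * 16 ^ r)) :
    1 - ENNReal.ofReal
        (2 * (5 * 16 ^ r + 1) ^ 2 * (4 ^ r * N + 1) ^ 2 * Real.exp (-(8 * 16 ^ r))) ≤
      (Measure.pi fun _ : Fin (m ^ 2) => unif m) (matchable m B) := by
  have := isProbabilityMeasure_unif hm
  have hs0 : (0 : ℝ) < 4224 * 8 ^ r := by positivity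
  have hσ : 0 < σ := hs0.trans_le hσ1
  have hN' : (0 : ℝ) < N := by exact_mod_cast hN
  have hm' : (0 : ℝ) < m := by exact_mod_cast hm
  have hq : ((m ^ 2 : ℕ) : ℝ) * (1 / (N : ℝ) ^ 2) = σ ^ 2 := by
    push_cast
    rw [← hσm]
    field_simp
  have hrs : (2 : ℝ) ^ r ≤ 4224 * 8 ^ r := by
    have : (2 : ℝ) ^ r ≤ 8 ^ r := by gcongr; norm_num
    have : (0 : ℝ) ≤ 8 ^ r := by positivity
    linarith
  have hidx : ∀ x ∈ sqr m, (idx N σ x.1, idx N σ x.2) ∈ box N ∧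
      ((idx N σ x.1 * σ ≤ x.1 ∧ x.1 ≤ (idx N σ x.1 + 1) * σ) ∧
        idx N σ x.2 * σ ≤ x.2 ∧ x.2 ≤ (idx N σ x.2 + 1) * σ) := by
    intro x hx
    have h1 := idx_spec hN hσ hx.1.1 (hx.1.2.trans_eq hσm.symm)
    have h2 := idx_spec hN hσ hx.2.1 (hx.2.2.trans_eq hσm.symm)
    exact ⟨mem_box.2 ⟨h1.1, h2.1⟩, h1.2, h2.2⟩
  obtain ⟨Bad, hBad, hgood⟩ := good_event (unif m) (m ^ 2) N r
    (fun c : ℤ × ℤ => Set.Icc (c.1 * σ) ((c.1 + 1) * σ) ×ˢ Set.Icc (c.2 * σ) ((c.2 + 1) * σ))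
    (fun c => measurableSet_Icc.prod measurableSet_Icc) (p := 1 / (N : ℝ) ^ 2) (by positivity)
    (fun c _ => by
      refine (unif_real_rect_le hm (t := σ) (by ring) (by ring) hσ.le).trans_eq ?_
      rw [← hσm]
      field_simp)
    (by
      have : ((box N).card : ℝ) = (N : ℝ) ^ 2 := by simp [box, sq]
      rw [this, one_div, inv_mul_cancel₀ (by positivity)])
    (fun x => (idx N σ x.1, idx N σ x.2)) (sqr m)
    (fun x hx => ⟨(hidx x hx).1, (hidx x hx).2⟩) (s := 4224 * 8 ^ r) hrs
    (by rw [hq]; nlinarith)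
  set P := Measure.pi fun _ : Fin (m ^ 2) => unif m with hP
  set E : Set (Fin (m ^ 2) → ℝ × ℝ) := {ω | ¬ ∀ i, ω i ∈ sqr m} with hE
  have hPE : P E = 0 := ae_mem_sqr hm (m ^ 2)
  have hcover : Set.univ ⊆ matchable m B ∪ (Bad ∪ E) := by
    intro ω _
    by_cases hωE : ω ∈ E
    · exact Or.inr (Or.inr hωE)
    by_cases hωB : ω ∈ Bad
    · exact Or.inr (Or.inl hωB)
    left
    have hsq : ∀ i, ω i ∈ sqr m := not_not.1 hωE
    have hdisc := hgood ω hωB hsq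
    obtain ⟨φ, hφ⟩ := exists_matching hσ hσm ω (fun i => (idx N σ (ω i).1, idx N σ (ω i).2))
      (fun i => (hidx _ (hsq i)).2) (fun R hR => by
        refine le_card_thicken (r := r) (s := 4224 * 8 ^ r) le_rfl (by gcongr) ?_
          (fun i => (hidx _ (hsq i)).1) hN2 ?_ hR
        · rw [← mul_pow, mul_comm, hσm]
          push_cast
          rfl
        · intro k hk v hv
          have := hdisc k hk v hv
          rw [hq] at this
          exact this)
    exact ⟨φ, fun i => (hφ i).trans hB⟩
  have h1 : (1 : ENNReal) ≤ P (matchable m B) + P Bad := by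
    calc (1 : ENNReal) = P Set.univ := measure_univ.symm
      _ ≤ P (matchable m B ∪ (Bad ∪ E)) := measure_mono hcover
      _ ≤ P (matchable m B) + (P Bad + P E) :=
        (measure_union_le _ _).trans (by gcongr; exact measure_union_le _ _)
      _ = P (matchable m B) + P Bad := by rw [hPE, add_zero]
  have h2 : P Bad ≤ ENNReal.ofReal
      (2 * (5 * 16 ^ r + 1) ^ 2 * (4 ^ r * N + 1) ^ 2 * Real.exp (-(8 * 16 ^ r))) := by
    rw [← ENNReal.ofReal_toReal (measure_ne_top P Bad)]
    exact ENNReal.ofReal_le_ofReal hBad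
  exact tsub_le_iff_right.2 (h1.trans (by gcongr))

/-! ### Choice of parameters -/

/-- The union bound beats all polynomial factors in `m ≤ 2 ^ 16 ^ r`. -/
lemma bad_le {m N r : ℕ} (hm : 0 < m) (hN : 0 < N) (hNm : N ≤ m) (hmr : m ≤ 2 ^ 16 ^ r) :
    2 * (5 * 16 ^ r + 1) ^ 2 * (4 ^ r * N + 1) ^ 2 * Real.exp (-(8 * 16 ^ r)) ≤ 288 / (m : ℝ) := by
  have hm' : (0 : ℝ) < m := by exact_mod_cast hm
  set Y : ℝ := 2 ^ 16 ^ r with hY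
  have hY0 : 0 < Y := by positivity
  have hmY : (m : ℝ) ≤ Y := by
    rw [hY]
    exact_mod_cast hmr
  have hNY : (N : ℝ) ≤ Y := le_trans (by exact_mod_cast hNm) hmY
  have h16 : (16 : ℝ) ^ r ≤ Y := by
    rw [hY]
    exact_mod_cast (Nat.lt_two_pow_self (n := 16 ^ r)).le
  have h1 : (1 : ℝ) ≤ 16 ^ r := one_le_pow₀ (by norm_num)
  have hN1 : (1 : ℝ) ≤ N := by exact_mod_cast hN
  have h4 : (1 : ℝ) ≤ 4 ^ r := one_le_pow₀ (by norm_num)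
  have e4 : ((4 : ℝ) ^ r) ^ 2 = 16 ^ r := by
    rw [← pow_mul, mul_comm, pow_mul]
    norm_num
  have hexp : Real.exp (-(8 * 16 ^ r)) ≤ (Y ^ 8)⁻¹ := by
    rw [Real.exp_neg]
    gcongr
    have h2 : (2 : ℝ) ≤ Real.exp 1 := by
      have := Real.add_one_le_exp 1
      linarith
    calc Y ^ 8 = 2 ^ (8 * 16 ^ r) := by rw [hY, ← pow_mul, mul_comm]
      _ ≤ Real.exp 1 ^ (8 * 16 ^ r) := by gcongr
      _ = Real.exp (8 * 16 ^ r) := by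
        rw [← Real.exp_nat_mul]
        push_cast
        rw [mul_one]
  have hA : (5 * 16 ^ r + 1) ^ 2 ≤ (6 * Y) ^ 2 := by gcongr; linarith
  have hC : (4 ^ r * (N : ℝ) + 1) ^ 2 ≤ 4 * Y * Y ^ 2 := by
    have h5 : (1 : ℝ) ≤ 4 ^ r * N := one_le_mul_of_one_le_of_one_le h4 hN1
    calc (4 ^ r * (N : ℝ) + 1) ^ 2 ≤ (2 * (4 ^ r * N)) ^ 2 := by gcongr; linarith
      _ = 4 * (4 ^ r) ^ 2 * (N : ℝ) ^ 2 := by ring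
      _ ≤ 4 * Y * Y ^ 2 := by rw [e4]; gcongr
  have hY1 : 1 ≤ Y := h1.trans h16
  calc 2 * (5 * 16 ^ r + 1) ^ 2 * (4 ^ r * N + 1) ^ 2 * Real.exp (-(8 * 16 ^ r))
      ≤ 2 * (6 * Y) ^ 2 * (4 * Y * Y ^ 2) * (Y ^ 8)⁻¹ := by gcongr
    _ = 288 / (Y ^ 2 * Y) := by field_simp; norm_num
    _ ≤ 288 / (1 * m) := by
      have : 1 ≤ Y ^ 2 := one_le_pow₀ hY1
      gcongr
    _ = 288 / m := by rw [one_mul]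

lemma natLog_le {m : ℕ} (hm : 0 < m) : (Nat.log 2 m : ℝ) ≤ 2 * Real.log m := by
  have h1 : ((2 : ℝ)) ^ Nat.log 2 m ≤ m := by exact_mod_cast Nat.pow_log_le_self 2 hm.ne'
  have h2 := Real.log_le_log (by positivity) h1
  rw [Real.log_pow] at h2
  have h3 := Real.log_two_gt_d9
  have h4 : (0 : ℝ) ≤ Nat.log 2 m := by positivity
  nlinarith

/-- Choice of the dyadic parameter: `16 ^ r` is of the order of `log m`, so the cells, of side
about `8 ^ r = (16 ^ r) ^ (3 / 4)`, have side of the order of `(log m) ^ (3 / 4)`. -/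
lemma prob_ge {m : ℕ} (hm : 2 ≤ m) (hlarge : 67584 * Real.log m ≤ m) :
    1 - ENNReal.ofReal (288 / (m : ℝ)) ≤ (Measure.pi fun _ : Fin (m ^ 2) => unif m)
      (matchable m (608256 * Real.log m ^ ((3 : ℝ) / 4))) := by
  have hm0 : 0 < m := by omega
  set L := Nat.log 2 m with hL
  have hL1 : 1 ≤ L := Nat.log_pos (by norm_num) hm
  set u := Nat.log 16 L with hu
  have hu1 : 16 ^ u ≤ L := Nat.pow_log_le_self 16 (by omega)
  have hu2 : L < 16 ^ (u + 1) := Nat.lt_pow_succ_log_self (by norm_num) L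
  have hlog : 0 < Real.log m := Real.log_pos (by exact_mod_cast hm)
  have hLlog : (L : ℝ) ≤ 2 * Real.log m := natLog_le hm0
  have hu1' : (16 : ℝ) ^ u ≤ L := by exact_mod_cast hu1
  have hmr : m ≤ 2 ^ 16 ^ (u + 1) :=
    (Nat.lt_pow_succ_log_self (b := 2) (by norm_num) m).le.trans
      (Nat.pow_le_pow_right (by norm_num) hu2)
  set S : ℕ := 4224 * 8 ^ (u + 1) with hS
  have hS0 : 0 < S := by positivity
  have hS' : (S : ℝ) = 4224 * 8 ^ (u + 1) := by rw [hS]; push_cast; rfl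
  have hSm : S ≤ m := by
    have h8 : (8 : ℝ) ^ u ≤ 16 ^ u := by gcongr; norm_num
    have : (S : ℝ) ≤ m := by
      rw [hS', pow_succ]
      linarith
    exact_mod_cast this
  set N := m / S with hNdef
  have hN : 0 < N := Nat.div_pos hSm hS0
  have hN' : (0 : ℝ) < N := by exact_mod_cast hN
  have hN1 : (1 : ℝ) ≤ N := by exact_mod_cast hN
  have hNm : N ≤ m := Nat.div_le_self m S
  have hNS : (N : ℝ) * S ≤ m := by exact_mod_cast Nat.div_mul_le_self m S
  have hNS' : (m : ℝ) ≤ (N + 1) * S := by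
    exact_mod_cast (Nat.lt_div_mul_add hS0 (a := m)).le.trans_eq (by ring)
  have hσm : (N : ℝ) * (m / N) = m := by field_simp
  have hσ1 : (S : ℝ) ≤ m / N := by rw [le_div_iff₀ hN']; linarith
  have hσ2 : (m : ℝ) / N ≤ 2 * S := by
    rw [div_le_iff₀ hN']
    have : (0 : ℝ) < S := by exact_mod_cast hS0
    nlinarith
  have hN2 : 2 * (N + 1) ^ 2 ≤ 2 ^ (5 * 16 ^ (u + 1)) := by
    set Y := 2 ^ 16 ^ (u + 1) with hY
    have hY2 : 2 ≤ Y := hm.trans hmr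
    calc 2 * (N + 1) ^ 2 ≤ 2 * (Y + Y) ^ 2 := by gcongr <;> omega
      _ = 2 ^ 3 * Y ^ 2 := by ring
      _ ≤ Y ^ 3 * Y ^ 2 := by gcongr
      _ = 2 ^ (5 * 16 ^ (u + 1)) := by rw [← pow_add, hY, ← pow_mul, mul_comm]
  have h8 : (8 : ℝ) ^ u ≤ 2 * Real.log m ^ ((3 : ℝ) / 4) := by
    calc (8 : ℝ) ^ u = ((16 : ℝ) ^ u) ^ ((3 : ℝ) / 4) := by
          have e : (8 : ℝ) = (16 : ℝ) ^ ((3 : ℝ) / 4) := by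
            rw [show (16 : ℝ) = 2 ^ (4 : ℝ) by norm_num, ← Real.rpow_mul (by norm_num)]
            norm_num
          rw [← Real.rpow_natCast (16 : ℝ), ← Real.rpow_mul (by norm_num), mul_comm,
            Real.rpow_mul (by norm_num), ← e, Real.rpow_natCast]
      _ ≤ (2 * Real.log m) ^ ((3 : ℝ) / 4) := by
          gcongr
          exact hu1'.trans hLlog
      _ = 2 ^ ((3 : ℝ) / 4) * Real.log m ^ ((3 : ℝ) / 4) := Real.mul_rpow (by norm_num) hlog.le
      _ ≤ 2 * Real.log m ^ ((3 : ℝ) / 4) := by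
          gcongr
          calc (2 : ℝ) ^ ((3 : ℝ) / 4) ≤ 2 ^ (1 : ℝ) :=
                Real.rpow_le_rpow_of_exponent_le (by norm_num) (by norm_num)
            _ = 2 := Real.rpow_one 2
  have hB : 4 * ((m : ℝ) / N) + 1 ≤ 608256 * Real.log m ^ ((3 : ℝ) / 4) := by
    have hS1 : (1 : ℝ) ≤ S := by exact_mod_cast hS0
    have : 9 * (S : ℝ) ≤ 608256 * Real.log m ^ ((3 : ℝ) / 4) := by
      rw [hS', pow_succ]
      linarith
    linarith
  refine le_trans ?_ (prob_matchable hm0 hN hσm (r := u + 1) (hS' ▸ hσ1) (hS' ▸ hσ2) hB hN2)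
  exact tsub_le_tsub_left (ENNReal.ofReal_le_ofReal (bad_le hm0 hN hNm hmr)) 1

lemma tendsto_matchable : Filter.Tendsto
    (fun m : ℕ => (Measure.pi fun _ : Fin (m ^ 2) => unif m)
      (matchable m (608256 * Real.log m ^ ((3 : ℝ) / 4)))) Filter.atTop (nhds 1) := by
  have hlim : Filter.Tendsto (fun m : ℕ => 1 - ENNReal.ofReal (288 / (m : ℝ))) Filter.atTop
      (nhds 1) := by
    have h := ENNReal.tendsto_ofReal (tendsto_const_div_atTop_nhds_zero_nat 288)
    have h2 := ENNReal.Tendsto.sub (tendsto_const_nhds (x := (1 : ENNReal)) (f := Filter.atTop)) h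
      (Or.inl ENNReal.one_ne_top)
    simpa using h2
  have hlarge : ∀ᶠ m : ℕ in Filter.atTop, 67584 * Real.log m ≤ m := by
    have h := (Real.isLittleO_log_id_atTop.bound (c := 1 / 67584) (by norm_num))
    filter_upwards [tendsto_natCast_atTop_atTop.eventually h] with m hm
    simp only [id, Real.norm_eq_abs, Nat.abs_cast] at hm
    have := le_abs_self (Real.log m)
    linarith
  refine tendsto_of_tendsto_of_tendsto_of_le_of_le' hlim tendsto_const_nhds ?_ ?_
  · filter_upwards [hlarge, Filter.eventually_ge_atTop 2] with m h1 h2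
    exact prob_ge h2 h1
  · filter_upwards [Filter.eventually_ge_atTop 1] with m hm
    have := isProbabilityMeasure_unif hm
    exact prob_le_one

end MinimaxMatching

/-- Minimax Grid Matching (Leighton–Shor): there is a constant `K` such that,
with probability tending to `1` as `m → ∞`, `m²` points chosen independently
and uniformly at random in the square `[0, m]²` can be perfectly matched to
the `m²` grid points `(i + 1/2, j + 1/2)`, `0 ≤ i, j < m`, so that every
matched pair is at Euclidean distance at most `K (log m)^{3/4}`. -/
theorem minimax_grid_matching :
    ∃ K : ℝ, Filter.Tendsto
      (fun m : ℕ =>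
        (Measure.pi (fun _ : Fin (m ^ 2) =>
            (volume (Set.Icc (0 : ℝ) m ×ˢ Set.Icc (0 : ℝ) m))⁻¹ •
              volume.restrict (Set.Icc (0 : ℝ) m ×ˢ Set.Icc (0 : ℝ) m)))
          {ω : Fin (m ^ 2) → ℝ × ℝ | ∃ φ : Fin (m ^ 2) ≃ Fin m × Fin m,
            ∀ i, Real.sqrt (((ω i).1 - ((((φ i).1 : ℕ) : ℝ) + 1 / 2)) ^ 2 +
                ((ω i).2 - ((((φ i).2 : ℕ) : ℝ) + 1 / 2)) ^ 2) ≤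
              K * Real.log m ^ ((3 : ℝ) / 4)})
      Filter.atTop (nhds 1) := by
  exact ⟨608256, MinimaxMatching.tendsto_matchable⟩
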